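/- arXiv:1908.00885 — 2 statements merged into one kernel-verified Lean document; each statement's English description precedes it below -/
import Mathlib

section
/- Let d ≥ 2, let t ≥ 1 be an integer, and let C ⊂ S^{d-1} be a tight spherical (2t+1)-design. Then for every real p with 2t−2 ≤ p ≤ 2t and p > 0, the uniform probability measure μ_C = (1/|C|) Σ_{x∈C} δ_x minimizes the p-frame energy I_p(μ) = ∫∫ |⟨x,y⟩|^p dμ(x)dμ(y) over all Borel probability measures μ on S^{d-1}; that is, I_p(μ) ≥ I_p(μ_C) for every Borel probability measure μ on S^{d-1}. -/
/-!
The case of an even integer `p` is elementary: `s ^ (2 n)` is a positive definite kernel on the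
sphere, and a design of strength at least `2 n` minimizes the energy of every such polynomial
kernel (`IsSphDesign.energy_le`, a completed square in the feature space).

For `p = 2 t - 2 + 2 θ` with `0 < θ < 1`, the power `|s| ^ p` is a positive mixture over `a > 0` of
the functions `f_a(s) = s ^ (2 t) / (s ^ 2 + a)` (`energy_eq_mixture`), so it is enough to treat
`f_a` (`energy_rational_le`). This is a linear programming bound. Away from `±1`, the inner products
of a tight design are symmetric about `0` (`neg_mem_innerProds`); in the variable `u = s ^ 2` they
become nodes `r 0 < … < r k = 1`, together with `u = 0` when orthogonal pairs occur. Interpolate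
`u ^ t / (u + a)` at these nodes, each `r i` with `i < k` taken twice, the nodes `1` and possibly `0`
taken once. The Newton coefficients are nonnegative and the remainder is nonnegative on `[0, 1]`
and zero at the nodes (`exists_newton`). Hence the theorem follows once the interpolant is positive
definite as a function of `s`.

The Newton basis polynomials are products of two factors `s ^ ε ∏_{i < j} (s ^ 2 - r i)`, so it
remains to see that these factors are positive definite. Polynomials of degree at most `t`
orthogonal to all lower degrees with respect to the distribution of inner products of the design
reproduce themselves, up to a constant, under convolution over the design, which makes them
positive definite (`isPosKernel_of_orth`). Finally, for a discrete functional with positive weights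
the products over the smallest nodes are nonnegative combinations of its orthogonal polynomials
(`prod_nodes_mem_cone`): removing the largest node changes the orthogonal polynomials by
Christoffel–Darboux into nonnegative combinations of the old ones, and the last one left is the
nodal product.
-/

open MeasureTheory Metric
open scoped RealInnerProductSpace

noncomputable section

/-- The unit sphere `S^{d-1}` in `ℝ^d` with the standard inner product. -/
abbrev Sph (d : ℕ) := Metric.sphere (0 : EuclideanSpace ℝ (Fin d)) 1

/-- The uniform (rotation-invariant) Borel probability measure `σ` on the sphere
`S^{d-1}`, obtained by normalizing the canonical measure on the unit sphere induced
by the Lebesgue measure. -/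
def sphσ (d : ℕ) : Measure (Sph d) :=
  (((volume : Measure (EuclideanSpace ℝ (Fin d))).toSphere) Set.univ)⁻¹ •
    ((volume : Measure (EuclideanSpace ℝ (Fin d))).toSphere)

variable {d : ℕ}

/-- The energy integral `I_f(μ) = ∫∫ f (⟨x,y⟩) dμ(x) dμ(y)` of a Borel measure `μ`
on the sphere `S^{d-1}`. -/
def energy (f : ℝ → ℝ) (μ : Measure (Sph d)) : ℝ :=
  ∫ x, ∫ y, f ⟪(x : EuclideanSpace ℝ (Fin d)), (y : EuclideanSpace ℝ (Fin d))⟫ ∂μ ∂μ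

/-- The uniform probability measure `(1/|C|) ∑_{x ∈ C} δ_x` on a finite set
`C ⊆ S^{d-1}`. -/
def unifOn (C : Finset (Sph d)) : Measure (Sph d) :=
  (C.card : ENNReal)⁻¹ • ∑ x ∈ C, Measure.dirac x

/-- Evaluation of a polynomial in `d` variables at a point of the sphere. -/
def evalPt (P : MvPolynomial (Fin d) ℝ) (x : Sph d) : ℝ :=
  MvPolynomial.eval (fun i => (x : EuclideanSpace ℝ (Fin d)) i) P

/-- `C` is a spherical `t`-design: averaging any polynomial of total degree at most
`t` over `C` gives its mean over the sphere with respect to the uniform measure. -/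
def IsSphDesign (d t : ℕ) (C : Finset (Sph d)) : Prop :=
  C.Nonempty ∧ ∀ P : MvPolynomial (Fin d) ℝ, P.totalDegree ≤ t →
    (∑ x ∈ C, evalPt P x) / (C.card : ℝ) = ∫ x, evalPt P x ∂(sphσ d)

/-- The set `A(C) = {⟨x,y⟩ : x, y ∈ C, x ≠ y}` of inner products between distinct
points of `C`. -/
def innerProds (C : Finset (Sph d)) : Set ℝ :=
  {t | ∃ x ∈ C, ∃ y ∈ C, x ≠ y ∧
    ⟪(x : EuclideanSpace ℝ (Fin d)), (y : EuclideanSpace ℝ (Fin d))⟫ = t}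

/-- `C` is a tight spherical `M`-design: it is a spherical `M`-design, and either
`M = 2m` and `A(C)` has exactly `m` elements, or `M = 2m - 1` and `A(C)` has exactly
`m` elements, one of which is `-1`. -/
def IsTightSphDesign (d M : ℕ) (C : Finset (Sph d)) : Prop :=
  IsSphDesign d M C ∧
    ((∃ m, M = 2 * m ∧ (innerProds C).ncard = m) ∨
     (∃ m, M + 1 = 2 * m ∧ (innerProds C).ncard = m ∧ (-1 : ℝ) ∈ innerProds C))

/-- A function `h : [-1,1] → ℝ` is positive definite on `S^{d-1}` if all matrices
`(h(⟨x_i, x_j⟩))_{i,j}` arising from points of the sphere are positive semidefinite. -/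
def IsPosDefOn (d : ℕ) (h : ℝ → ℝ) : Prop :=
  ∀ (N : ℕ) (x : Fin N → Sph d) (c : Fin N → ℂ),
    0 ≤ (∑ i, ∑ j,
      (h ⟪(x i : EuclideanSpace ℝ (Fin d)), (x j : EuclideanSpace ℝ (Fin d))⟫ : ℂ)
        * c i * (starRingEnd ℂ) (c j)).re

/-! ### Orthogonal polynomials of a discrete functional -/

open Polynomial in
/-- The discrete functional `P ↦ ∑_{i ≤ k} w i * P (r i)`. -/
def nodeSum (k : ℕ) (r w : ℕ → ℝ) (P : ℝ[X]) : ℝ :=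
  ∑ i ∈ Finset.range (k + 1), w i * P.eval (r i)

open Polynomial in
/-- `P` is the monic orthogonal polynomial of degree `n` for the discrete functional
`nodeSum k r w`. -/
def IsOrthPoly (k : ℕ) (r w : ℕ → ℝ) (n : ℕ) (P : ℝ[X]) : Prop :=
  P.Monic ∧ P.natDegree = n ∧ ∀ m : ℝ[X], m.degree < n → nodeSum k r w (P * m) = 0

section OrthPoly

open Polynomial

variable {k : ℕ} {r w : ℕ → ℝ}

lemma nodeSum_add (P Q : ℝ[X]) :
    nodeSum k r w (P + Q) = nodeSum k r w P + nodeSum k r w Q := by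
  simp [nodeSum, mul_add, Finset.sum_add_distrib]

lemma nodeSum_C_mul (a : ℝ) (P : ℝ[X]) :
    nodeSum k r w (C a * P) = a * nodeSum k r w P := by
  simp only [nodeSum, eval_mul, eval_C, Finset.mul_sum]
  exact Finset.sum_congr rfl fun i _ => by ring

lemma nodeSum_sub (P Q : ℝ[X]) :
    nodeSum k r w (P - Q) = nodeSum k r w P - nodeSum k r w Q := by
  simp [nodeSum, mul_sub, Finset.sum_sub_distrib]

/-- A polynomial of degree at most `k` vanishing at `k + 1` distinct nodes is zero. -/
lemma eq_zero_of_nodes (hr : ∀ i j, i < j → j ≤ k → r i < r j) {P : ℝ[X]}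
    (hP : P.degree < (k + 1 : ℕ)) (h : ∀ i ≤ k, P.eval (r i) = 0) : P = 0 := by
  have hinj : Set.InjOn r (Finset.range (k + 1) : Set ℕ) := by
    intro i hi j hj hij
    simp only [Finset.coe_range, Set.mem_Iio] at hi hj
    rcases lt_trichotomy i j with h1 | h1 | h1
    · exact absurd hij (hr i j h1 (by omega)).ne
    · exact h1
    · exact absurd hij (hr j i h1 (by omega)).ne'
  refine eq_zero_of_degree_lt_of_eval_index_eq_zero _ hinj (by simpa using hP) ?_
  intro i hi
  exact h i (by simpa [Nat.lt_succ_iff] using hi)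

lemma nodeSum_sq_pos (hr : ∀ i j, i < j → j ≤ k → r i < r j) (hw : ∀ i ≤ k, 0 < w i)
    {P : ℝ[X]} (hP : P.degree < (k + 1 : ℕ)) (h0 : P ≠ 0) : 0 < nodeSum k r w (P * P) := by
  have hnn : ∀ i ∈ Finset.range (k + 1), 0 ≤ w i * (P * P).eval (r i) := by
    intro i hi
    have := hw i (by simpa [Nat.lt_succ_iff] using hi)
    rw [eval_mul]
    exact mul_nonneg this.le (mul_self_nonneg _)
  refine lt_of_le_of_ne (Finset.sum_nonneg hnn) fun h => h0 ?_
  refine eq_zero_of_nodes hr hP fun i hi => ?_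
  have h2 := (Finset.sum_eq_zero_iff_of_nonneg hnn).1 h.symm i (by simpa [Nat.lt_succ_iff] using hi)
  rcases mul_eq_zero.1 h2 with h3 | h3
  · exact absurd h3 (hw i hi).ne'
  · rw [eval_mul] at h3
    exact mul_self_eq_zero.1 h3

/-- Existence of orthogonal polynomials: the Gram form on polynomials of degree `< n` is
nondegenerate, so `X ^ n` has an orthogonal projection there. -/
lemma exists_isOrthPoly (hr : ∀ i j, i < j → j ≤ k → r i < r j) (hw : ∀ i ≤ k, 0 < w i)
    {n : ℕ} (hn : n ≤ k + 1) : ∃ P, IsOrthPoly k r w n P := by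
  let V := degreeLT ℝ n
  let B : V →ₗ[ℝ] Module.Dual ℝ V := LinearMap.mk₂ ℝ
    (fun a b => nodeSum k r w ((a : ℝ[X]) * (b : ℝ[X])))
    (by intro a b c; simp [add_mul, nodeSum_add])
    (by intro c a b; simp [smul_eq_C_mul, mul_assoc, nodeSum_C_mul])
    (by intro a b c; simp [mul_add, nodeSum_add])
    (by intro c a b; simp [smul_eq_C_mul, mul_left_comm _ (C c), nodeSum_C_mul])
  have hfin : FiniteDimensional ℝ V :=
    Module.Finite.equiv (degreeLTEquiv ℝ n).symm
  have hB : Function.Injective B := by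
    rw [injective_iff_map_eq_zero]
    intro a ha
    by_contra h0
    have h1 : nodeSum k r w ((a : ℝ[X]) * (a : ℝ[X])) = 0 := by
      have := congrArg (fun f => f a) ha
      simpa [B] using this
    have h2 : (a : ℝ[X]).degree < (k + 1 : ℕ) :=
      lt_of_lt_of_le (mem_degreeLT.1 a.2) (by exact_mod_cast hn)
    exact (nodeSum_sq_pos hr hw h2 (by simpa using h0)).ne' h1
  have hS : Function.Surjective B :=
    (LinearMap.injective_iff_surjective_of_finrank_eq_finrank
      (Subspace.dual_finrank_eq (K := ℝ) (V := V)).symm).1 hB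
  let φ : Module.Dual ℝ V :=
    { toFun := fun b => nodeSum k r w (X ^ n * (b : ℝ[X]))
      map_add' := by intro a b; simp [mul_add, nodeSum_add]
      map_smul' := by intro c a; simp [smul_eq_C_mul, mul_left_comm _ (C c), nodeSum_C_mul] }
  obtain ⟨a, ha⟩ := hS φ
  have had : (a : ℝ[X]).degree < n := mem_degreeLT.1 a.2
  refine ⟨X ^ n - (a : ℝ[X]), ?_, ?_, ?_⟩
  · exact (monic_X_pow n).sub_of_left (by simpa using had)
  · have : (X ^ n - (a : ℝ[X])).degree = (n : WithBot ℕ) := by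
      rw [degree_sub_eq_left_of_degree_lt] <;> simp [had]
    exact natDegree_eq_of_degree_eq_some this
  · intro m hm
    have h1 := congrArg (fun f => f ⟨m, mem_degreeLT.2 hm⟩) ha
    simp only [B, φ, LinearMap.mk₂_apply, LinearMap.coe_mk, AddHom.coe_mk] at h1
    rw [sub_mul, nodeSum_sub, h1, sub_self]

lemma IsOrthPoly.degree {n : ℕ} {P : ℝ[X]} (h : IsOrthPoly k r w n P) : P.degree = n := by
  rw [degree_eq_natDegree h.1.ne_zero, h.2.1]

/-- For `R` of degree at most `n` the pairing with the orthogonal polynomial of degree `n` reads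
off the coefficient of `X ^ n`. -/
lemma IsOrthPoly.nodeSum_mul {n : ℕ} {P R : ℝ[X]} (h : IsOrthPoly k r w n P)
    (hR : R.degree < (n + 1 : ℕ)) :
    nodeSum k r w (R * P) = R.coeff n * nodeSum k r w (P * P) ∧
      (R - C (R.coeff n) * P).degree < n := by
  have hdeg : (R - C (R.coeff n) * P).degree < n := by
    rw [degree_lt_iff_coeff_zero]
    intro m hm
    rcases hm.eq_or_lt with rfl | hm
    · have : P.coeff n = 1 := by
        have := h.1.coeff_natDegree
        rwa [h.2.1] at this
      simp [this]
    · have h1 : R.coeff m = 0 := (degree_lt_iff_coeff_zero R (n + 1)).1 hR m hm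
      have h2 : P.coeff m = 0 := coeff_eq_zero_of_natDegree_lt (by rw [h.2.1]; exact hm)
      simp [h1, h2]
  refine ⟨?_, hdeg⟩
  have h3 := h.2.2 _ hdeg
  have h4 : P * (R - C (R.coeff n) * P) = R * P - C (R.coeff n) * (P * P) := by ring
  rw [h4, nodeSum_sub, nodeSum_C_mul] at h3
  linarith

/-- An orthogonal polynomial is nonnegative at the largest node: otherwise it would have a root
`ρ` beyond all nodes, and pairing it with its quotient by `X - ρ` would give a negative number. -/
lemma IsOrthPoly.eval_last_nonneg (hr : ∀ i j, i < j → j ≤ k → r i < r j)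
    (hw : ∀ i ≤ k, 0 < w i) {n : ℕ} (hn : n ≤ k + 1) {P : ℝ[X]} (h : IsOrthPoly k r w n P) :
    0 ≤ P.eval (r k) := by
  by_contra! hneg
  have hn0 : 0 < n := by
    rcases Nat.eq_zero_or_pos n with rfl | h0
    · have : P = 1 := h.1.natDegree_eq_zero.1 h.2.1
      simp [this] at hneg
      linarith
    · exact h0
  have htend : Filter.Tendsto (fun x => P.eval x) Filter.atTop Filter.atTop :=
    P.tendsto_atTop_of_leadingCoeff_nonneg (by rw [h.degree]; exact_mod_cast hn0)
      (by rw [h.1.leadingCoeff]; exact zero_le_one)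
  obtain ⟨b, hb, hbk⟩ := ((htend.eventually_ge_atTop 0).and
    (Filter.eventually_ge_atTop (r k))).exists
  obtain ⟨ρ, ⟨hρ1, -⟩, hρ⟩ := intermediate_value_Icc hbk P.continuous.continuousOn
    (show (0 : ℝ) ∈ Set.Icc (P.eval (r k)) (P.eval b) from ⟨hneg.le, hb⟩)
  have hρ2 : r k < ρ := by
    refine lt_of_le_of_ne hρ1 ?_
    rintro rfl
    simp only at hρ
    linarith
  obtain ⟨S, hS⟩ := dvd_iff_isRoot.2 (show P.IsRoot ρ from hρ)
  have hS0 : S ≠ 0 := by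
    rintro rfl
    exact h.1.ne_zero (by simpa using hS)
  have hSd : S.degree < n := by
    have h1 := h.2.1
    rw [hS, natDegree_mul (X_sub_C_ne_zero ρ) hS0, natDegree_X_sub_C] at h1
    rw [degree_eq_natDegree hS0]
    exact_mod_cast (by omega : S.natDegree < n)
  have h0 := h.2.2 S hSd
  have hterm : ∀ i ≤ k, w i * (P * S).eval (r i) = -(w i * (ρ - r i) * (S.eval (r i) ^ 2)) := by
    intro i _
    rw [hS]
    simp only [eval_mul, eval_sub, eval_X, eval_C]
    ring
  have hri : ∀ i ≤ k, 0 < ρ - r i := by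
    intro i hi
    rcases hi.eq_or_lt with rfl | hi
    · linarith
    · linarith [hr i k hi le_rfl]
  have hnn : ∀ i ∈ Finset.range (k + 1), 0 ≤ w i * (ρ - r i) * (S.eval (r i) ^ 2) := by
    intro i hi
    have hi' : i ≤ k := by simpa [Nat.lt_succ_iff] using hi
    exact mul_nonneg (mul_nonneg (hw i hi').le (hri i hi').le) (sq_nonneg _)
  have hsum : ∑ i ∈ Finset.range (k + 1), w i * (ρ - r i) * (S.eval (r i) ^ 2) = 0 := by
    have : nodeSum k r w (P * S) =
        -∑ i ∈ Finset.range (k + 1), w i * (ρ - r i) * (S.eval (r i) ^ 2) := by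
      rw [nodeSum, ← Finset.sum_neg_distrib]
      exact Finset.sum_congr rfl fun i hi => hterm i (by simpa [Nat.lt_succ_iff] using hi)
    linarith
  refine hS0 (eq_zero_of_nodes hr (lt_of_lt_of_le hSd (by exact_mod_cast hn)) fun i hi => ?_)
  have h2 := (Finset.sum_eq_zero_iff_of_nonneg hnn).1 hsum i
    (by simpa [Nat.lt_succ_iff] using hi)
  rcases mul_eq_zero.1 h2 with h3 | h3
  · exact absurd h3 (mul_pos (hw i hi) (hri i hi)).ne'
  · exact pow_eq_zero_iff (two_ne_zero) |>.1 h3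

/-- If `R` pairs nonnegatively with all orthogonal polynomials of degree `< n` and has degree
`< n`, then its expansion in orthogonal polynomials has nonnegative coefficients, so it lies in
every convex cone that contains them. -/
lemma mem_cone_of_nodeSum_nonneg (hr : ∀ i j, i < j → j ≤ k → r i < r j)
    (hw : ∀ i ≤ k, 0 < w i) (S : ℝ[X] → Prop) (S0 : S 0)
    (Sadd : ∀ P Q, S P → S Q → S (P + Q)) (Ssmul : ∀ (a : ℝ) P, 0 ≤ a → S P → S (C a * P))
    (n : ℕ) (hn : n ≤ k + 1) (hS : ∀ i < n, ∀ P, IsOrthPoly k r w i P → S P) :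
    ∀ R : ℝ[X], R.degree < n →
      (∀ i < n, ∀ P, IsOrthPoly k r w i P → 0 ≤ nodeSum k r w (R * P)) → S R := by
  induction n with
  | zero =>
    intro R hR _
    have : R = 0 := by
      rw [← degree_eq_bot]
      by_contra h
      rw [degree_eq_natDegree (by rintro rfl; simp at h)] at hR
      exact absurd hR (by simp)
    rwa [this]
  | succ n ih =>
    intro R hR hpos
    obtain ⟨P, hP⟩ := exists_isOrthPoly hr hw (n := n) (by omega)
    obtain ⟨h1, h2⟩ := hP.nodeSum_mul hR
    have hPP : 0 < nodeSum k r w (P * P) :=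
      nodeSum_sq_pos hr hw (by rw [hP.degree]; exact_mod_cast (by omega : n < k + 1)) hP.1.ne_zero
    have ha : 0 ≤ R.coeff n := by
      have := hpos n (Nat.lt_succ_self n) P hP
      rw [h1] at this
      exact nonneg_of_mul_nonneg_left this hPP
    have h3 : S (R - C (R.coeff n) * P) := by
      refine ih (by omega) (fun i hi => hS i (by omega)) _ h2 ?_
      intro i hi Q hQ
      have h4 := hP.2.2 Q (by rw [hQ.degree]; exact_mod_cast hi)
      have h5 : (R - C (R.coeff n) * P) * Q = R * Q - C (R.coeff n) * (P * Q) := by ring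
      rw [h5, nodeSum_sub, nodeSum_C_mul, h4, mul_zero, sub_zero]
      exact hpos i (by omega) Q hQ
    have h6 : R = (R - C (R.coeff n) * P) + C (R.coeff n) * P := by ring
    rw [h6]
    exact Sadd _ _ h3 (Ssmul _ _ ha (hS n (Nat.lt_succ_self n) P hP))

/-- Passing from the weights `w i` to `w i * (r k - r i)`, which removes the largest node, the new
orthogonal polynomials are (Christoffel–Darboux) nonnegative combinations of the old ones. -/
lemma orthPoly_mem_cone_of_shift (hr : ∀ i j, i < j → j ≤ k → r i < r j)
    (hw : ∀ i ≤ k, 0 < w i) (S : ℝ[X] → Prop) (S0 : S 0)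
    (Sadd : ∀ P Q, S P → S Q → S (P + Q)) (Ssmul : ∀ (a : ℝ) P, 0 ≤ a → S P → S (C a * P))
    (hS : ∀ n ≤ k, ∀ P, IsOrthPoly k r w n P → S P) {n : ℕ} (hn : n ≤ k) {R : ℝ[X]}
    (hR : R.Monic) (hRd : R.natDegree = n)
    (horth : ∀ m : ℝ[X], m.degree < n → nodeSum k r w (R * ((X - C (r k)) * m)) = 0) : S R := by
  have hdeg : R.degree = n := by rw [degree_eq_natDegree hR.ne_zero, hRd]
  have hRd' : R.degree < (n + 1 : ℕ) := by rw [hdeg]; exact_mod_cast Nat.lt_succ_self n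
  have key : ∀ i ≤ n, ∀ P, IsOrthPoly k r w i P →
      nodeSum k r w (R * P) = P.eval (r k) * nodeSum k r w R := by
    intro i hi P hP
    obtain ⟨Q, hQ⟩ := X_sub_C_dvd_sub_C_eval (a := r k) (p := P)
    have hP' : P = (X - C (r k)) * Q + C (P.eval (r k)) := by rw [← hQ]; ring
    have hQd : Q.degree < n := by
      by_cases hQ0 : Q = 0
      · simp [hQ0, bot_lt_iff_ne_bot]
      · have h1 : ((X - C (r k)) * Q).natDegree = 1 + Q.natDegree := by
          rw [natDegree_mul (X_sub_C_ne_zero _) hQ0, natDegree_X_sub_C]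
        rw [← hQ, natDegree_sub_C, hP.2.1] at h1
        rw [degree_eq_natDegree hQ0]
        exact_mod_cast (by omega : Q.natDegree < n)
    have h2 : R * P = R * ((X - C (r k)) * Q) + C (P.eval (r k)) * R := by
      conv_lhs => rw [hP']
      ring
    rw [h2, nodeSum_add, horth Q hQd, nodeSum_C_mul, zero_add]
  have hpos : 0 < nodeSum k r w R := by
    obtain ⟨P, hP⟩ := exists_isOrthPoly hr hw (n := n) (by omega)
    have h1 := (hP.nodeSum_mul hRd').1
    have hc : R.coeff n = 1 := by
      have := hR.coeff_natDegree
      rwa [hRd] at this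
    rw [key n le_rfl P hP, hc, one_mul] at h1
    have hPP : 0 < nodeSum k r w (P * P) :=
      nodeSum_sq_pos hr hw (by rw [hP.degree]; exact_mod_cast (by omega : n < k + 1)) hP.1.ne_zero
    rw [← h1] at hPP
    exact pos_of_mul_pos_right hPP (hP.eval_last_nonneg hr hw (by omega))
  refine mem_cone_of_nodeSum_nonneg hr hw S S0 Sadd Ssmul (n + 1) (by omega)
    (fun i hi => hS i (by omega)) R hRd' ?_
  intro i hi P hP
  rw [key i (by omega) P hP]
  exact mul_nonneg (hP.eval_last_nonneg hr hw (by omega)) hpos.le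

/-- All products `∏_{i < j} (X - r i)`, `j ≤ k`, over the smallest nodes lie in every convex cone
containing the orthogonal polynomials of the discrete functional. -/
lemma prod_nodes_mem_cone (S : ℝ[X] → Prop) (S0 : S 0)
    (Sadd : ∀ P Q, S P → S Q → S (P + Q)) (Ssmul : ∀ (a : ℝ) P, 0 ≤ a → S P → S (C a * P))
    (r : ℕ → ℝ) (k : ℕ) :
    ∀ w : ℕ → ℝ, (∀ i j, i < j → j ≤ k → r i < r j) → (∀ i ≤ k, 0 < w i) →
      (∀ n ≤ k, ∀ P, IsOrthPoly k r w n P → S P) →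
      ∀ j ≤ k, S (∏ i ∈ Finset.range j, (X - C (r i))) := by
  induction k with
  | zero =>
    intro w hr hw hS j hj
    obtain rfl : j = 0 := by omega
    refine hS 0 le_rfl _ ⟨by simp, by simp, ?_⟩
    intro m hm
    have : m = 0 := by
      by_contra h
      rw [degree_eq_natDegree h] at hm
      exact absurd hm (by simp)
    simp [this, nodeSum]
  | succ k ih =>
    intro w hr hw hS j hj
    have hshift : ∀ P m : ℝ[X], nodeSum (k + 1) r w (P * ((X - C (r (k + 1))) * m)) =
        -nodeSum k r (fun i => w i * (r (k + 1) - r i)) (P * m) := by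
      intro P m
      rw [nodeSum, Finset.sum_range_succ]
      simp only [nodeSum, eval_mul, eval_sub, eval_X, eval_C, sub_self, zero_mul, mul_zero,
        add_zero, ← Finset.sum_neg_distrib]
      exact Finset.sum_congr rfl fun i _ => by ring
    rcases hj.eq_or_lt with rfl | hj
    · refine orthPoly_mem_cone_of_shift hr hw S S0 Sadd Ssmul hS le_rfl
        (monic_prod_of_monic _ _ fun i _ => monic_X_sub_C _)
        (by rw [natDegree_prod_of_monic _ _ fun i _ => monic_X_sub_C _]; simp) ?_
      intro m _
      rw [hshift, nodeSum, Finset.sum_eq_zero, neg_zero]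
      intro i hi
      rw [eval_mul, eval_prod, Finset.prod_eq_zero hi (by simp)]
      simp
    · refine ih (fun i => w i * (r (k + 1) - r i)) (fun i j h1 h2 => hr i j h1 (by omega))
        (fun i hi => mul_pos (hw i (by omega)) (by linarith [hr i (k + 1) (by omega) le_rfl]))
        ?_ j (by omega)
      intro n hn P hP
      refine orthPoly_mem_cone_of_shift hr hw S S0 Sadd Ssmul hS (n := n) (by omega) hP.1 hP.2.1 ?_
      intro m hm
      rw [hshift, hP.2.2 m hm, neg_zero]

end OrthPoly

/-! ### Moments of the sphere and convolution over a design -/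

section SphereMoments

open Polynomial
open scoped Pointwise

/-- The action of a linear isometry on the unit sphere. -/
def sphMap (U : EuclideanSpace ℝ (Fin d) ≃ₗᵢ[ℝ] EuclideanSpace ℝ (Fin d)) (z : Sph d) : Sph d :=
  ⟨U z, by simp⟩

lemma measurable_sphMap (U : EuclideanSpace ℝ (Fin d) ≃ₗᵢ[ℝ] EuclideanSpace ℝ (Fin d)) :
    Measurable (sphMap U) :=
  (U.continuous.measurable.comp measurable_subtype_coe).subtype_mk

lemma measurePreserving_sphMap
    (U : EuclideanSpace ℝ (Fin d) ≃ₗᵢ[ℝ] EuclideanSpace ℝ (Fin d)) :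
    MeasurePreserving (sphMap U) (sphσ d) (sphσ d) := by
  refine ⟨measurable_sphMap U, ?_⟩
  rw [sphσ, Measure.map_smul]
  congr 1
  ext s hs
  rw [Measure.map_apply (measurable_sphMap U) hs, Measure.toSphere_apply' _ hs,
    Measure.toSphere_apply' _ (measurable_sphMap U hs)]
  congr 1
  have hset : Set.Ioo (0 : ℝ) 1 • (((↑) : Sph d → EuclideanSpace ℝ (Fin d)) '' (sphMap U ⁻¹' s)) =
      U ⁻¹' (Set.Ioo (0 : ℝ) 1 • (((↑) : Sph d → EuclideanSpace ℝ (Fin d)) '' s)) := by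
    ext v
    simp only [Set.mem_smul, Set.mem_image, Set.mem_preimage]
    constructor
    · rintro ⟨a, ha, _, ⟨z, hz, rfl⟩, rfl⟩
      exact ⟨a, ha, _, ⟨_, hz, rfl⟩, by simp [sphMap]⟩
    · rintro ⟨a, ha, _, ⟨z, hz, rfl⟩, h⟩
      refine ⟨a, ha, _, ⟨sphMap U.symm z, ?_, rfl⟩, ?_⟩
      · have : sphMap U (sphMap U.symm z) = z := by
          ext1
          simp [sphMap]
        rwa [this]
      · apply U.injective
        rw [← h]
        simp [sphMap]
  rw [hset]
  exact (U.measurePreserving).measure_preimage_equiv (f := U.toMeasurableEquiv) _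

/-- The mixed moments of the first two coordinates with respect to the uniform measure. -/
def sphMoment (hd : 2 ≤ d) (a b : ℕ) : ℝ :=
  ∫ z : Sph d, (z : EuclideanSpace ℝ (Fin d)) ⟨0, by omega⟩ ^ a *
    (z : EuclideanSpace ℝ (Fin d)) ⟨1, by omega⟩ ^ b ∂(sphσ d)

lemma integral_orthonormal_pair (hd : 2 ≤ d) {x w : EuclideanSpace ℝ (Fin d)} (hx : ‖x‖ = 1)
    (hw : ‖w‖ = 1) (hxw : ⟪x, w⟫ = 0) (a b : ℕ) :
    ∫ z : Sph d, ⟪x, (z : EuclideanSpace ℝ (Fin d))⟫ ^ a *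
      ⟪w, (z : EuclideanSpace ℝ (Fin d))⟫ ^ b ∂(sphσ d) = sphMoment hd a b := by
  let i0 : Fin d := ⟨0, by omega⟩
  let i1 : Fin d := ⟨1, by omega⟩
  have h01 : i1 ≠ i0 := by simp [i0, i1]
  let v : Fin d → EuclideanSpace ℝ (Fin d) := fun i => if i = i0 then x else w
  have hv : Orthonormal ℝ (({i0, i1} : Set (Fin d)).domRestrict v) := by
    constructor
    · rintro ⟨i, hi⟩
      change ‖v i‖ = 1
      by_cases h : i = i0
      · simp [v, h, hx]
      · simp [v, h, hw]
    · rintro ⟨i, hi⟩ ⟨j, hj⟩ hij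
      have hij' : i ≠ j := fun h => hij (by simp [h])
      change ⟪v i, v j⟫ = 0
      simp only [Set.mem_insert_iff, Set.mem_singleton_iff] at hi hj
      rcases hi with rfl | rfl <;> rcases hj with rfl | rfl
      · exact absurd rfl hij'
      · simp [v, h01, hxw]
      · rw [real_inner_comm]
        simp [v, h01, hxw]
      · exact absurd rfl hij'
  obtain ⟨B, hB⟩ := hv.exists_orthonormalBasis_extension_of_card_eq (by simp)
  have hB0 : B i0 = x := by rw [hB i0 (by simp)]; simp [v]
  have hB1 : B i1 = w := by rw [hB i1 (by simp)]; simp [v, h01]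
  have hmp := measurePreserving_sphMap B.repr
  have hcont : Continuous fun z : Sph d => (z : EuclideanSpace ℝ (Fin d)) i0 ^ a *
      (z : EuclideanSpace ℝ (Fin d)) i1 ^ b := by fun_prop
  have h := integral_map (μ := sphσ d) hmp.measurable.aemeasurable
    hcont.aestronglyMeasurable
  rw [hmp.map_eq] at h
  rw [sphMoment, h]
  refine integral_congr_ae (Filter.Eventually.of_forall fun z => ?_)
  simp only [sphMap, B.repr_apply_apply, hB0, hB1]

lemma sphMoment_odd (hd : 2 ≤ d) (a b : ℕ) (hb : Odd b) : sphMoment hd a b = 0 := by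
  let e0 : EuclideanSpace ℝ (Fin d) := EuclideanSpace.single ⟨0, by omega⟩ 1
  let e1 : EuclideanSpace ℝ (Fin d) := EuclideanSpace.single ⟨1, by omega⟩ 1
  have h0 : ‖e0‖ = 1 := by simp [e0]
  have h1 : ‖e1‖ = 1 := by simp [e1]
  have h01 : ⟪e0, e1⟫ = 0 := by simp [e0, e1, PiLp.inner_apply]
  have p1 := integral_orthonormal_pair hd h0 h1 h01 a b
  have p2 := integral_orthonormal_pair hd h0 (w := -e1) (by simpa using h1) (by simpa using h01) a b
  have : ∫ z : Sph d, ⟪e0, (z : EuclideanSpace ℝ (Fin d))⟫ ^ a *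
      ⟪-e1, (z : EuclideanSpace ℝ (Fin d))⟫ ^ b ∂(sphσ d) =
      -∫ z : Sph d, ⟪e0, (z : EuclideanSpace ℝ (Fin d))⟫ ^ a *
      ⟪e1, (z : EuclideanSpace ℝ (Fin d))⟫ ^ b ∂(sphσ d) := by
    rw [← integral_neg]
    refine integral_congr_ae (Filter.Eventually.of_forall fun z => ?_)
    simp only [inner_neg_left, hb.neg_pow]
    ring
  linarith

/-- Every unit vector `y` can be written as `s x + ρ w` with `w` a unit vector orthogonal to `x`. -/
lemma exists_orth_decomp (hd : 2 ≤ d) (x y : Sph d) :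
    ∃ (w : EuclideanSpace ℝ (Fin d)) (ρ : ℝ), ‖w‖ = 1 ∧
      ⟪(x : EuclideanSpace ℝ (Fin d)), w⟫ = 0 ∧
      (y : EuclideanSpace ℝ (Fin d)) =
        ⟪(x : EuclideanSpace ℝ (Fin d)), (y : EuclideanSpace ℝ (Fin d))⟫ •
          (x : EuclideanSpace ℝ (Fin d)) + ρ • w ∧
      ρ ^ 2 = 1 - ⟪(x : EuclideanSpace ℝ (Fin d)), (y : EuclideanSpace ℝ (Fin d))⟫ ^ 2 := by
  set u : EuclideanSpace ℝ (Fin d) := (x : EuclideanSpace ℝ (Fin d))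
  set v : EuclideanSpace ℝ (Fin d) := (y : EuclideanSpace ℝ (Fin d))
  have hX : ‖u‖ = 1 := by simp [u]
  have hY : ‖v‖ = 1 := by simp [v]
  have hXX : ⟪u, u⟫ = 1 := by rw [real_inner_self_eq_norm_sq, hX]; norm_num
  have hYY : ⟪v, v⟫ = 1 := by rw [real_inner_self_eq_norm_sq, hY]; norm_num
  set s := ⟪u, v⟫
  set V := v - s • u
  have hXV : ⟪u, V⟫ = 0 := by simp [V, inner_sub_right, inner_smul_right, s, hX]
  have hVV : ‖V‖ ^ 2 = 1 - s ^ 2 := by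
    rw [← real_inner_self_eq_norm_sq]
    simp only [V, inner_sub_left, inner_sub_right, inner_smul_left, inner_smul_right, hXX, hYY,
      real_inner_comm u v, RCLike.conj_to_real]
    change 1 - s * s - s * (s - s * 1) = _
    ring
  by_cases hV : V = 0
  · obtain ⟨w, hw, hwX⟩ : ∃ w : EuclideanSpace ℝ (Fin d), w ≠ 0 ∧ ⟪u, w⟫ = 0 := by
      by_contra! hcon
      have hinj : Function.Injective (innerₛₗ ℝ u : EuclideanSpace ℝ (Fin d) →ₗ[ℝ] ℝ) := by
        rw [injective_iff_map_eq_zero]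
        intro w hw
        by_contra h0
        exact hcon w h0 (by simpa using hw)
      have := LinearMap.finrank_le_finrank_of_injective hinj
      simp at this
      omega
    refine ⟨‖w‖⁻¹ • w, 0, ?_, ?_, ?_, ?_⟩
    · rw [norm_smul, norm_inv, norm_norm, inv_mul_cancel₀ (norm_ne_zero_iff.2 hw)]
    · rw [inner_smul_right, hwX, mul_zero]
    · rw [zero_smul, add_zero]
      exact sub_eq_zero.1 hV
    · rw [← hVV, hV]; simp
  · refine ⟨‖V‖⁻¹ • V, ‖V‖, ?_, ?_, ?_, hVV⟩
    · rw [norm_smul, norm_inv, norm_norm, inv_mul_cancel₀ (norm_ne_zero_iff.2 hV)]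
    · rw [inner_smul_right, hXV, mul_zero]
    · rw [smul_smul, mul_inv_cancel₀ (norm_ne_zero_iff.2 hV), one_smul]
      simp [V]

instance : IsFiniteMeasure (sphσ d) := by
  constructor
  rw [sphσ, Measure.smul_apply, smul_eq_mul]
  refine lt_of_le_of_lt (ENNReal.inv_mul_le_one _) ENNReal.one_lt_top

lemma integrable_sphσ {f : Sph d → ℝ} (hf : Continuous f) : Integrable f (sphσ d) :=
  hf.integrable_of_hasCompactSupport (HasCompactSupport.of_compactSpace f)

/-- The spherical convolution of two powers is a polynomial in the inner product, of degree at
most the second exponent. -/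
lemma exists_integral_pow_mul_pow (hd : 2 ≤ d) (a b : ℕ) :
    ∃ T : ℝ[X], T.natDegree ≤ b ∧ ∀ x y : Sph d,
      ∫ z : Sph d, ⟪(x : EuclideanSpace ℝ (Fin d)), (z : EuclideanSpace ℝ (Fin d))⟫ ^ a *
        ⟪(y : EuclideanSpace ℝ (Fin d)), (z : EuclideanSpace ℝ (Fin d))⟫ ^ b ∂(sphσ d) =
      T.eval ⟪(x : EuclideanSpace ℝ (Fin d)), (y : EuclideanSpace ℝ (Fin d))⟫ := by
  refine ⟨∑ l ∈ Finset.range (b + 1), if Even l then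
    C (sphMoment hd (a + (b - l)) l * b.choose l) * (X ^ (b - l) * (1 - X ^ 2) ^ (l / 2)) else 0,
    ?_, ?_⟩
  · refine natDegree_sum_le_of_forall_le _ _ fun l hl => ?_
    have hl' : l ≤ b := by simpa [Nat.lt_succ_iff] using hl
    split_ifs with he
    · refine (natDegree_C_mul_le _ _).trans (natDegree_mul_le.trans ?_)
      have h1 : ((1 - X ^ 2 : ℝ[X]) ^ (l / 2)).natDegree ≤ l / 2 * 2 := by
        refine natDegree_pow_le_of_le _ ?_
        compute_degree
      have h2 : (X ^ (b - l) : ℝ[X]).natDegree = b - l := natDegree_X_pow _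
      omega
    · simp
  · intro x y
    obtain ⟨w, ρ, hw, hxw, hy, hρ⟩ := exists_orth_decomp hd x y
    set s := ⟪(x : EuclideanSpace ℝ (Fin d)), (y : EuclideanSpace ℝ (Fin d))⟫ with hs
    have hx : ‖(x : EuclideanSpace ℝ (Fin d))‖ = 1 := by simp
    have hexp : ∀ z : Sph d,
        ⟪(x : EuclideanSpace ℝ (Fin d)), (z : EuclideanSpace ℝ (Fin d))⟫ ^ a *
        ⟪(y : EuclideanSpace ℝ (Fin d)), (z : EuclideanSpace ℝ (Fin d))⟫ ^ b =
        ∑ l ∈ Finset.range (b + 1), (ρ ^ l * s ^ (b - l) * b.choose l) *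
          (⟪(x : EuclideanSpace ℝ (Fin d)), (z : EuclideanSpace ℝ (Fin d))⟫ ^ (a + (b - l)) *
            ⟪w, (z : EuclideanSpace ℝ (Fin d))⟫ ^ l) := by
      intro z
      conv_lhs => rw [hy]
      rw [inner_add_left, inner_smul_left, inner_smul_left, RCLike.conj_to_real,
        RCLike.conj_to_real, add_comm, add_pow, Finset.mul_sum]
      refine Finset.sum_congr rfl fun l _ => ?_
      rw [mul_pow, mul_pow, pow_add]
      ring
    simp_rw [hexp]
    rw [integral_finsetSum _ fun l _ => integrable_sphσ (by fun_prop), eval_finsetSum]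
    refine Finset.sum_congr rfl fun l _ => ?_
    rw [integral_const_mul, integral_orthonormal_pair hd hx hw hxw]
    split_ifs with he
    · have h1 : ρ ^ l = (1 - s ^ 2) ^ (l / 2) := by
        rw [← hρ, ← pow_mul, Nat.two_mul_div_two_of_even he]
      rw [h1]
      simp only [eval_mul, eval_C, eval_pow, eval_X, eval_sub, eval_one]
      ring
    · rw [sphMoment_odd hd _ _ (Nat.not_even_iff_odd.1 he)]
      simp

/-- For a design of strength `M`, the average over `C` of `⟨x,z⟩^a ⟨y,z⟩^b` is the corresponding
spherical integral as long as `a + b ≤ M`. -/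
lemma IsSphDesign.sum_pow_mul_pow {M : ℕ} {C : Finset (Sph d)} (hC : IsSphDesign d M C)
    {a b : ℕ} (hab : a + b ≤ M) (x y : Sph d) :
    ∑ z ∈ C, ⟪(x : EuclideanSpace ℝ (Fin d)), (z : EuclideanSpace ℝ (Fin d))⟫ ^ a *
        ⟪(y : EuclideanSpace ℝ (Fin d)), (z : EuclideanSpace ℝ (Fin d))⟫ ^ b =
      C.card * ∫ z : Sph d,
        ⟪(x : EuclideanSpace ℝ (Fin d)), (z : EuclideanSpace ℝ (Fin d))⟫ ^ a *
        ⟪(y : EuclideanSpace ℝ (Fin d)), (z : EuclideanSpace ℝ (Fin d))⟫ ^ b ∂(sphσ d) := by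
  let lin : Sph d → MvPolynomial (Fin d) ℝ := fun v =>
    ∑ i, MvPolynomial.C ((v : EuclideanSpace ℝ (Fin d)) i) * MvPolynomial.X i
  have hlin : ∀ v, (lin v).totalDegree ≤ 1 := by
    intro v
    refine MvPolynomial.totalDegree_finsetSum_le fun i _ => ?_
    refine (MvPolynomial.totalDegree_mul _ _).trans ?_
    simp
  have heval : ∀ v z : Sph d, MvPolynomial.eval (fun i => (z : EuclideanSpace ℝ (Fin d)) i) (lin v)
      = ⟪(v : EuclideanSpace ℝ (Fin d)), (z : EuclideanSpace ℝ (Fin d))⟫ := by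
    intro v z
    simp [lin, PiLp.inner_apply, mul_comm]
  have hdeg : (lin x ^ a * lin y ^ b).totalDegree ≤ M := by
    refine (MvPolynomial.totalDegree_mul _ _).trans (le_trans ?_ hab)
    refine add_le_add ((MvPolynomial.totalDegree_pow _ _).trans ?_)
      ((MvPolynomial.totalDegree_pow _ _).trans ?_)
    · simpa using Nat.mul_le_mul_left a (hlin x)
    · simpa using Nat.mul_le_mul_left b (hlin y)
  have h := hC.2 _ hdeg
  simp only [evalPt, map_mul, map_pow, heval] at h
  have hc : (C.card : ℝ) ≠ 0 := by
    simpa using hC.1.ne_empty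
  rw [← h]
  field_simp

/-- Convolution over a design: for `deg f + deg g ≤ M`, the sum `∑_{z ∈ C} f(⟨x,z⟩) g(⟨y,z⟩)` is a
polynomial in `⟨x,y⟩` of degree at most `deg g`, for all points `x`, `y` of the sphere. -/
lemma IsSphDesign.exists_conv (hd : 2 ≤ d) {M : ℕ} {C : Finset (Sph d)} (hC : IsSphDesign d M C)
    (f g : ℝ[X]) (hfg : f.natDegree + g.natDegree ≤ M) :
    ∃ T : ℝ[X], T.natDegree ≤ g.natDegree ∧ ∀ x y : Sph d,
      ∑ z ∈ C, f.eval ⟪(x : EuclideanSpace ℝ (Fin d)), (z : EuclideanSpace ℝ (Fin d))⟫ *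
        g.eval ⟪(y : EuclideanSpace ℝ (Fin d)), (z : EuclideanSpace ℝ (Fin d))⟫ =
      T.eval ⟪(x : EuclideanSpace ℝ (Fin d)), (y : EuclideanSpace ℝ (Fin d))⟫ := by
  choose T hT1 hT2 using fun a b => exists_integral_pow_mul_pow hd a b
  refine ⟨∑ a ∈ Finset.range (f.natDegree + 1), ∑ b ∈ Finset.range (g.natDegree + 1),
    Polynomial.C (f.coeff a * g.coeff b * (C.card : ℝ)) * T a b, ?_, ?_⟩
  · refine natDegree_sum_le_of_forall_le _ _ fun a _ => natDegree_sum_le_of_forall_le _ _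
      fun b hb => (natDegree_C_mul_le _ _).trans ((hT1 a b).trans ?_)
    simpa [Nat.lt_succ_iff] using hb
  · intro x y
    simp_rw [eval_finsetSum, eval_mul, eval_C, ← hT2]
    simp_rw [eval_eq_sum_range (p := f), eval_eq_sum_range (p := g), Finset.sum_mul_sum]
    rw [Finset.sum_comm]
    refine Finset.sum_congr rfl fun a ha => ?_
    rw [Finset.sum_comm]
    refine Finset.sum_congr rfl fun b hb => ?_
    have hab : a + b ≤ M := by
      simp only [Finset.mem_range] at ha hb
      omega
    rw [mul_assoc, ← hC.sum_pow_mul_pow hab x y, Finset.mul_sum]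
    exact Finset.sum_congr rfl fun z _ => by ring

end SphereMoments

/-! ### Positive definite polynomial kernels and their energies -/

section Kernels

open Polynomial

/-- The inner product of two points of the sphere. -/
abbrev ip (x y : Sph d) : ℝ :=
  ⟪(x : EuclideanSpace ℝ (Fin d)), (y : EuclideanSpace ℝ (Fin d))⟫

/-- The polynomial kernel `q(⟨x,y⟩)` on the sphere is a finite sum of terms `φ(x) φ(y)` with `φ`
continuous. By Schoenberg's theorem this is positive definiteness of `q` on the sphere; the
explicit decomposition is what the energy estimate consumes. -/
def IsPosKernel (d : ℕ) (q : ℝ[X]) : Prop :=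
  ∃ (ι : Type) (_ : Fintype ι) (φ : ι → Sph d → ℝ), (∀ i, Continuous (φ i)) ∧
    ∀ x y : Sph d, q.eval (ip x y) = ∑ i, φ i x * φ i y

lemma ip_self (x : Sph d) : ip x x = 1 := by
  simp [ip]

lemma ip_comm (x y : Sph d) : ip x y = ip y x := real_inner_comm _ _

lemma abs_ip_le (x y : Sph d) : |ip x y| ≤ 1 := by
  simpa using abs_real_inner_le_norm (x : EuclideanSpace ℝ (Fin d)) (y : EuclideanSpace ℝ (Fin d))

lemma ip_sq_le (x y : Sph d) : ip x y ^ 2 ≤ 1 := by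
  rw [← sq_abs]
  exact pow_le_one₀ (abs_nonneg _) (abs_ip_le x y)

lemma ip_eq_one {x y : Sph d} (h : ip x y = 1) : x = y := by
  have := (inner_eq_one_iff_of_norm_eq_one (𝕜 := ℝ) (x := (x : EuclideanSpace ℝ (Fin d)))
    (y := (y : EuclideanSpace ℝ (Fin d))) (by simp) (by simp)).1 h
  exact Subtype.ext this

lemma IsPosKernel.zero : IsPosKernel d 0 :=
  ⟨Empty, inferInstance, fun _ _ => 0, fun _ => continuous_const, fun x y => by simp⟩

lemma IsPosKernel.one : IsPosKernel d 1 :=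
  ⟨Unit, inferInstance, fun _ _ => 1, fun _ => continuous_const, fun x y => by simp⟩

lemma IsPosKernel.X : IsPosKernel d X :=
  ⟨Fin d, inferInstance, fun i x => (x : EuclideanSpace ℝ (Fin d)) i, fun i => by fun_prop,
    fun x y => by simp [ip, PiLp.inner_apply, mul_comm]⟩

lemma IsPosKernel.add {p q : ℝ[X]} (hp : IsPosKernel d p) (hq : IsPosKernel d q) :
    IsPosKernel d (p + q) := by
  obtain ⟨ι, _, φ, hφ, h1⟩ := hp
  obtain ⟨κ, _, ψ, hψ, h2⟩ := hq
  refine ⟨ι ⊕ κ, inferInstance, Sum.elim φ ψ, ?_, fun x y => ?_⟩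
  · rintro (i | i)
    exacts [hφ i, hψ i]
  · simp [h1, h2]

lemma IsPosKernel.mul {p q : ℝ[X]} (hp : IsPosKernel d p) (hq : IsPosKernel d q) :
    IsPosKernel d (p * q) := by
  obtain ⟨ι, _, φ, hφ, h1⟩ := hp
  obtain ⟨κ, _, ψ, hψ, h2⟩ := hq
  refine ⟨ι × κ, inferInstance, fun i x => φ i.1 x * ψ i.2 x, fun i => (hφ _).mul (hψ _),
    fun x y => ?_⟩
  rw [eval_mul, h1, h2, Finset.sum_mul_sum, Fintype.sum_prod_type]
  exact Finset.sum_congr rfl fun i _ => Finset.sum_congr rfl fun j _ => by ring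

lemma IsPosKernel.C_mul {a : ℝ} {p : ℝ[X]} (ha : 0 ≤ a) (hp : IsPosKernel d p) :
    IsPosKernel d (Polynomial.C a * p) := by
  obtain ⟨ι, _, φ, hφ, h1⟩ := hp
  refine ⟨ι, inferInstance, fun i x => Real.sqrt a * φ i x, fun i => (hφ i).const_mul _,
    fun x y => ?_⟩
  rw [eval_mul, h1, eval_C, Finset.mul_sum]
  refine Finset.sum_congr rfl fun i _ => ?_
  have := Real.mul_self_sqrt ha
  calc a * (φ i x * φ i y) = (Real.sqrt a * Real.sqrt a) * (φ i x * φ i y) := by rw [this]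
    _ = _ := by ring

lemma IsPosKernel.pow {p : ℝ[X]} (hp : IsPosKernel d p) (n : ℕ) : IsPosKernel d (p ^ n) := by
  induction n with
  | zero => simpa using IsPosKernel.one
  | succ n ih => simpa [pow_succ] using ih.mul hp

lemma IsPosKernel.sum {ι : Type*} (s : Finset ι) (p : ι → ℝ[X])
    (hp : ∀ i ∈ s, IsPosKernel d (p i)) : IsPosKernel d (∑ i ∈ s, p i) :=
  Finset.sum_induction p (IsPosKernel d) (fun _ _ => IsPosKernel.add) IsPosKernel.zero hp

lemma integral_unifOn (C : Finset (Sph d)) (f : Sph d → ℝ) (hf : Continuous f) :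
    ∫ x, f x ∂(unifOn C) = (C.card : ℝ)⁻¹ * ∑ x ∈ C, f x := by
  rw [unifOn, integral_smul_measure, integral_finsetSum_measure]
  · simp
  · intro i _
    exact integrable_dirac' hf.stronglyMeasurable (by simp)

lemma continuous_ip : Continuous fun z : Sph d × Sph d => ip z.1 z.2 := by
  unfold ip
  fun_prop

lemma continuous_ip_right (x : Sph d) : Continuous fun y : Sph d => ip x y := by
  unfold ip
  fun_prop

lemma energy_unifOn (C : Finset (Sph d)) (f : ℝ → ℝ) (hf : Continuous f) :
    energy f (unifOn C) = (C.card : ℝ)⁻¹ * ((C.card : ℝ)⁻¹ * ∑ x ∈ C, ∑ y ∈ C, f (ip x y)) := by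
  unfold energy
  have h : ∀ x : Sph d, ∫ y, f (ip x y) ∂(unifOn C) = (C.card : ℝ)⁻¹ * ∑ y ∈ C, f (ip x y) :=
    fun x => integral_unifOn C _ (hf.comp (continuous_ip_right x))
  simp_rw [h]
  rw [integral_unifOn, ← Finset.mul_sum]
  refine continuous_const.mul (continuous_finsetSum _ fun y _ => hf.comp ?_)
  unfold ip
  fun_prop

lemma isProbabilityMeasure_unifOn {C : Finset (Sph d)} (hC : C.Nonempty) :
    IsProbabilityMeasure (unifOn C) := by
  constructor
  have : (C.card : ENNReal) ≠ 0 := by simpa using hC.ne_empty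
  simp [unifOn, ENNReal.inv_mul_cancel this]

lemma integrable_sph {μ : Measure (Sph d)} [IsProbabilityMeasure μ] {f : Sph d → ℝ}
    (hf : Continuous f) : Integrable f μ :=
  hf.integrable_of_hasCompactSupport (HasCompactSupport.of_compactSpace f)

lemma IsSphDesign.exists_row_sum (hd : 2 ≤ d) {M : ℕ} {C : Finset (Sph d)}
    (hC : IsSphDesign d M C) (q : ℝ[X]) (hq : q.natDegree ≤ M) :
    ∃ κ : ℝ, ∀ x : Sph d, ∑ z ∈ C, q.eval (ip x z) = κ := by
  obtain ⟨T, hT, h⟩ := hC.exists_conv hd q 1 (by simpa using hq)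
  obtain ⟨κ, rfl⟩ := natDegree_eq_zero.1 (Nat.le_zero.1 (by simpa using hT))
  exact ⟨κ, fun x => by simpa using h x x⟩

/-- A design of strength `deg q` minimizes the energy of every positive definite polynomial `q`. -/
lemma IsSphDesign.energy_le (hd : 2 ≤ d) {M : ℕ} {C : Finset (Sph d)} (hC : IsSphDesign d M C)
    (q : ℝ[X]) (hq : q.natDegree ≤ M) (hpos : IsPosKernel d q)
    (μ : Measure (Sph d)) [IsProbabilityMeasure μ] :
    energy (fun s => q.eval s) (unifOn C) ≤ energy (fun s => q.eval s) μ := by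
  obtain ⟨κ, hκ⟩ := hC.exists_row_sum hd q hq
  obtain ⟨ι, _, φ, hφ, h⟩ := hpos
  set n : ℝ := (C.card : ℝ) with hn
  have hn0 : n ≠ 0 := by
    simpa [hn] using hC.1.ne_empty
  rw [energy_unifOn _ _ q.continuous]
  simp_rw [hκ, Finset.sum_const, nsmul_eq_mul]
  rw [← hn, inv_mul_cancel_left₀ hn0]
  have hE : energy (fun s => q.eval s) μ = ∑ i, (∫ x, φ i x ∂μ) ^ 2 := by
    change ∫ x, ∫ y, q.eval (ip x y) ∂μ ∂μ = _
    simp_rw [h]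
    have h1 : ∀ x, ∫ y, ∑ i, φ i x * φ i y ∂μ = ∑ i, φ i x * ∫ y, φ i y ∂μ := by
      intro x
      rw [integral_finsetSum _ fun i _ => integrable_sph ((hφ i).const_mul _)]
      simp_rw [integral_const_mul]
    simp_rw [h1]
    rw [integral_finsetSum _ fun i _ => integrable_sph ((hφ i).mul_const _)]
    simp_rw [integral_mul_const, sq]
  -- `c i` is the mean of the `i`-th feature over the design
  set c : ι → ℝ := fun i => n⁻¹ * ∑ z ∈ C, φ i z with hc
  have hrow : ∀ x, ∑ i, φ i x * c i = n⁻¹ * κ := by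
    intro x
    rw [← hκ x]
    simp_rw [h, hc]
    rw [Finset.sum_comm, Finset.mul_sum]
    refine Finset.sum_congr rfl fun i _ => ?_
    rw [← Finset.mul_sum]
    ring
  have h1 : ∑ i, (∫ x, φ i x ∂μ) * c i = n⁻¹ * κ := by
    have : ∫ x, ∑ i, φ i x * c i ∂μ = n⁻¹ * κ := by
      simp_rw [hrow]
      simp
    rw [integral_finsetSum _ fun i _ => integrable_sph ((hφ i).mul_const _)] at this
    simpa [integral_mul_const] using this
  have h2 : ∑ i, c i * c i = n⁻¹ * κ := by
    have : ∑ x ∈ C, ∑ i, φ i x * c i = n * (n⁻¹ * κ) := by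
      simp_rw [hrow]
      simp [hn]
    rw [Finset.sum_comm] at this
    calc ∑ i, c i * c i = n⁻¹ * ∑ i, ∑ x ∈ C, φ i x * c i := by
          rw [Finset.mul_sum]
          refine Finset.sum_congr rfl fun i _ => ?_
          rw [← Finset.sum_mul]
          simp only [hc]
          ring
      _ = _ := by rw [this, inv_mul_cancel_left₀ hn0]
  have h3 : 0 ≤ ∑ i, ((∫ x, φ i x ∂μ) - c i) ^ 2 := Finset.sum_nonneg fun i _ => sq_nonneg _
  have h4 : ∑ i, ((∫ x, φ i x ∂μ) - c i) ^ 2 =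
      ∑ i, (∫ x, φ i x ∂μ) ^ 2 - 2 * ∑ i, (∫ x, φ i x ∂μ) * c i + ∑ i, c i * c i := by
    rw [Finset.mul_sum, ← Finset.sum_sub_distrib, ← Finset.sum_add_distrib]
    exact Finset.sum_congr rfl fun i _ => by ring
  rw [hE]
  rw [h1, h2] at h4
  linarith

/-- The sum of `q(⟨x,z⟩)` over all ordered pairs of points of `C`. -/
def pairSum (C : Finset (Sph d)) (q : ℝ[X]) : ℝ := ∑ x ∈ C, ∑ z ∈ C, q.eval (ip x z)

variable {C : Finset (Sph d)}

lemma pairSum_add (p q : ℝ[X]) : pairSum C (p + q) = pairSum C p + pairSum C q := by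
  simp [pairSum, Finset.sum_add_distrib]

lemma pairSum_sub (p q : ℝ[X]) : pairSum C (p - q) = pairSum C p - pairSum C q := by
  simp [pairSum, Finset.sum_sub_distrib]

lemma pairSum_C_mul (a : ℝ) (q : ℝ[X]) :
    pairSum C (Polynomial.C a * q) = a * pairSum C q := by
  simp [pairSum, Finset.mul_sum]

/-- A design sums every odd polynomial of admissible degree to zero: the row sums at `x` and `-x`
coincide. -/
lemma IsSphDesign.pairSum_odd (hd : 2 ≤ d) {M : ℕ} (hC : IsSphDesign d M C) (q : ℝ[X])
    (hq : q.natDegree ≤ M) (hodd : ∀ s, q.eval (-s) = -q.eval s) : pairSum C q = 0 := by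
  obtain ⟨κ, hκ⟩ := hC.exists_row_sum hd q hq
  refine Finset.sum_eq_zero fun x _ => ?_
  have h1 := hκ x
  have h2 := hκ (-x)
  have h3 : ∀ z : Sph d, ip (-x) z = -ip x z := fun z => by simp [ip]
  simp_rw [h3, hodd, Finset.sum_neg_distrib] at h2
  linarith

lemma finite_innerProds (C : Finset (Sph d)) : (innerProds C).Finite := by
  refine (((C ×ˢ C).image fun z => ip z.1 z.2).finite_toSet).subset ?_
  rintro s ⟨x, hx, y, hy, _, rfl⟩
  simp only [Finset.coe_image, Set.mem_image, Finset.mem_coe, Finset.mem_product]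
  exact ⟨(x, y), ⟨hx, hy⟩, rfl⟩

lemma one_notMem_innerProds (C : Finset (Sph d)) : (1 : ℝ) ∉ innerProds C := by
  rintro ⟨x, _, y, _, hne, h⟩
  exact hne (ip_eq_one h)

lemma eval_eq_zero_of_pairSum_sq {q : ℝ[X]} (h : pairSum C (q * q) = 0) {x z : Sph d}
    (hx : x ∈ C) (hz : z ∈ C) : q.eval (ip x z) = 0 := by
  simp only [pairSum, eval_mul] at h
  have h1 := (Finset.sum_eq_zero_iff_of_nonneg
    fun x _ => Finset.sum_nonneg fun z _ => mul_self_nonneg _).1 h x hx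
  have h2 := (Finset.sum_eq_zero_iff_of_nonneg fun z _ => mul_self_nonneg _).1 h1 z hz
  exact mul_self_eq_zero.1 h2

lemma eq_zero_of_pairSum_sq {t : ℕ} (hne : C.Nonempty) (hA : (innerProds C).ncard = t + 1)
    {q : ℝ[X]} (hq : q.natDegree ≤ t + 1) (h : pairSum C (q * q) = 0) : q = 0 := by
  classical
  obtain ⟨x₀, hx₀⟩ := hne
  have hfin := finite_innerProds C
  refine eq_zero_of_natDegree_lt_card_of_eval_eq_zero' q (insert 1 hfin.toFinset) ?_ ?_
  · intro s hs
    rcases Finset.mem_insert.1 hs with rfl | hs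
    · rw [← ip_self x₀]
      exact eval_eq_zero_of_pairSum_sq h hx₀ hx₀
    · obtain ⟨x, hx, y, hy, _, rfl⟩ := hfin.mem_toFinset.1 hs
      exact eval_eq_zero_of_pairSum_sq h hx hy
  · rw [Finset.card_insert_of_notMem (by simpa using one_notMem_innerProds C),
      ← Set.ncard_eq_toFinset_card _ hfin, hA]
    omega

/-- A polynomial `p` of degree at most `t` orthogonal to all polynomials of smaller degree on a
tight design is, up to a constant, its own convolution over the design; if `p(1) ≥ 0` it is
therefore positive definite. -/
lemma isPosKernel_of_orth (hd : 2 ≤ d) {t : ℕ} (hC : IsSphDesign d (2 * t + 1) C)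
    (hA : (innerProds C).ncard = t + 1) {p : ℝ[X]} {N : ℕ} (hp : p.Monic) (hN : p.natDegree = N)
    (hNt : N ≤ t) (horth : ∀ m : ℝ[X], m.natDegree < N → pairSum C (p * m) = 0)
    (h1 : 0 ≤ p.eval 1) : IsPosKernel d p := by
  -- the convolution of `p` with lower-degree polynomials vanishes
  have hconv0 : ∀ m : ℝ[X], m.natDegree < N → ∀ x y : Sph d,
      ∑ z ∈ C, p.eval (ip x z) * m.eval (ip y z) = 0 := by
    intro m hm x y
    obtain ⟨T, hT, hTe⟩ := hC.exists_conv hd p m (by omega)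
    obtain ⟨U, hU, hUe⟩ := hC.exists_conv hd T m (by omega)
    have hT0 : T = 0 := by
      refine eq_zero_of_pairSum_sq hC.1 hA (by omega) ?_
      rw [← horth U (by omega)]
      simp only [pairSum, eval_mul]
      refine Finset.sum_congr rfl fun x _ => ?_
      calc ∑ y ∈ C, T.eval (ip x y) * T.eval (ip x y)
          = ∑ y ∈ C, ∑ z ∈ C, p.eval (ip x z) * (T.eval (ip x y) * m.eval (ip z y)) := by
            refine Finset.sum_congr rfl fun y _ => ?_
            nth_rw 1 [← hTe x y]
            rw [Finset.sum_mul]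
            refine Finset.sum_congr rfl fun z _ => ?_
            rw [ip_comm z y]
            ring
        _ = ∑ z ∈ C, p.eval (ip x z) * U.eval (ip x z) := by
            rw [Finset.sum_comm]
            refine Finset.sum_congr rfl fun z _ => ?_
            rw [← Finset.mul_sum, hUe x z]
    rw [hTe x y, hT0, eval_zero]
  obtain ⟨G, hG, hGe⟩ := hC.exists_conv hd p p (by omega)
  have hGorth : ∀ m : ℝ[X], m.natDegree < N → pairSum C (G * m) = 0 := by
    intro m hm
    simp only [pairSum, eval_mul]
    refine Finset.sum_eq_zero fun x _ => ?_
    calc ∑ y ∈ C, G.eval (ip x y) * m.eval (ip x y)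
        = ∑ y ∈ C, ∑ z ∈ C, p.eval (ip x z) * (p.eval (ip z y) * m.eval (ip x y)) := by
          refine Finset.sum_congr rfl fun y _ => ?_
          rw [← hGe x y, Finset.sum_mul]
          refine Finset.sum_congr rfl fun z _ => ?_
          rw [ip_comm z y]
          ring
      _ = 0 := by
          rw [Finset.sum_comm]
          refine Finset.sum_eq_zero fun z _ => ?_
          rw [← Finset.mul_sum, hconv0 m hm z x, mul_zero]
  set c : ℝ := G.coeff N with hc
  have hD : G - Polynomial.C c * p = 0 := by
    by_contra hne
    have hdeg : (G - Polynomial.C c * p).natDegree < N := by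
      rw [natDegree_lt_iff_degree_lt hne, degree_lt_iff_coeff_zero]
      intro n hn
      rcases hn.eq_or_lt with rfl | hlt
      · have : p.coeff N = 1 := by rw [← hN]; exact hp
        simp [hc, this]
      · rw [coeff_sub, coeff_C_mul, coeff_eq_zero_of_natDegree_lt (by omega),
          coeff_eq_zero_of_natDegree_lt (p := p) (by omega)]
        simp
    refine hne (eq_zero_of_pairSum_sq hC.1 hA (by omega) ?_)
    nth_rw 1 [sub_mul]
    rw [pairSum_sub, hGorth _ hdeg, mul_assoc, pairSum_C_mul, horth _ hdeg]
    simp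
  have hGp : G = Polynomial.C c * p := sub_eq_zero.1 hD
  have hdiag : ∀ x : Sph d, ∑ z ∈ C, p.eval (ip x z) * p.eval (ip x z) = c * p.eval 1 := by
    intro x
    rw [hGe x x, hGp]
    simp
  have hcpos : 0 < c := by
    by_contra! hcle
    refine hp.ne_zero (eq_zero_of_pairSum_sq hC.1 hA (by omega) ?_)
    have hle : pairSum C (p * p) ≤ 0 := by
      simp only [pairSum, eval_mul]
      refine Finset.sum_nonpos fun x _ => ?_
      rw [hdiag]
      exact mul_nonpos_of_nonpos_of_nonneg hcle h1
    refine le_antisymm hle ?_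
    simp only [pairSum, eval_mul]
    exact Finset.sum_nonneg fun x _ => Finset.sum_nonneg fun z _ => mul_self_nonneg _
  have hGpos : IsPosKernel d G := by
    refine ⟨C, inferInstance, fun z x => p.eval (ip x z), fun z => ?_, fun x y => ?_⟩
    · unfold ip
      fun_prop
    · rw [Finset.sum_coe_sort C fun z => p.eval (ip x z) * p.eval (ip y z)]
      exact (hGe x y).symm
  have : p = Polynomial.C c⁻¹ * G := by
    rw [hGp, ← mul_assoc, ← Polynomial.C_mul, inv_mul_cancel₀ hcpos.ne']
    simp
  rw [this]
  exact hGpos.C_mul (inv_nonneg.2 hcpos.le)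

end Kernels

/-! ### Newton interpolation of `u ^ j / (u + a)` -/

section Newton

/-- The divided difference of a polynomial with nonnegative coefficients at a nonnegative node has
nonnegative coefficients. -/
lemma exists_divided_difference (b : ℕ → ℝ) (hb : ∀ i, 0 ≤ b i) (v : ℝ) (hv : 0 ≤ v) (j : ℕ) :
    ∃ q : ℕ → ℝ, (∀ i, 0 ≤ q i) ∧ ∀ u : ℝ, ∑ i ∈ Finset.range (j + 1), b i * u ^ i =
      ∑ i ∈ Finset.range (j + 1), b i * v ^ i + (u - v) * ∑ i ∈ Finset.range j, q i * u ^ i := by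
  induction j with
  | zero => exact ⟨fun _ => 0, fun _ => le_rfl, fun u => by simp⟩
  | succ j ih =>
    obtain ⟨q, hq, h⟩ := ih
    refine ⟨fun l => (if l < j then q l else 0) + b (j + 1) * v ^ (j - l), fun l => ?_,
      fun u => ?_⟩
    · have := hq l
      have := hb (j + 1)
      dsimp only
      split_ifs <;> positivity
    · rw [Finset.sum_range_succ, h u, Finset.sum_range_succ _ (j + 1)]
      have hgeom := geom_sum₂_mul u v (j + 1)
      have h1 : ∑ l ∈ Finset.range (j + 1), ((if l < j then q l else 0) + b (j + 1) * v ^ (j - l))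
          * u ^ l = ∑ l ∈ Finset.range j, q l * u ^ l +
            b (j + 1) * ∑ l ∈ Finset.range (j + 1), u ^ l * v ^ (j + 1 - 1 - l) := by
        simp_rw [add_mul]
        rw [Finset.sum_add_distrib, Finset.sum_range_succ, Finset.mul_sum]
        congr 1
        · simp only [lt_irrefl, if_false, zero_mul, add_zero]
          refine Finset.sum_congr rfl fun l hl => ?_
          rw [if_pos (Finset.mem_range.1 hl)]
        · refine Finset.sum_congr rfl fun l _ => ?_
          rw [Nat.add_sub_cancel]
          ring
      rw [h1]
      linear_combination (-b (j + 1)) * hgeom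

/-- Newton interpolation with nonnegative nodes of `c u ^ j / (u + a) + P(u)`, where `P` has
nonnegative coefficients and degree less than `j`: the Newton coefficients are nonnegative and the
remainder is a nonpositive multiple of the full nodal product divided by `u + a`. -/
lemma exists_newton {a : ℝ} (ha : 0 < a) (j : ℕ) : ∀ (c : ℝ) (_ : 0 ≤ c) (b : ℕ → ℝ)
    (_ : ∀ i, 0 ≤ b i) (v : ℕ → ℝ) (_ : ∀ i, 0 ≤ v i), ∃ coef : ℕ → ℝ, (∀ i, 0 ≤ coef i) ∧
    ∃ e : ℝ, 0 ≤ e ∧ ∀ u : ℝ, 0 ≤ u →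
      c * u ^ j / (u + a) + ∑ i ∈ Finset.range j, b i * u ^ i =
        ∑ i ∈ Finset.range (j + 1), coef i * ∏ l ∈ Finset.range i, (u - v l) -
          e * ((∏ l ∈ Finset.range (j + 1), (u - v l)) / (u + a)) := by
  induction j with
  | zero =>
    intro c hc b _ v hv
    have hv0 := hv 0
    refine ⟨fun _ => c / (v 0 + a), fun _ => by positivity, c / (v 0 + a), by positivity,
      fun u hu => ?_⟩
    have h1 : u + a ≠ 0 := by positivity
    have h2 : v 0 + a ≠ 0 := by positivity
    simp
    field_simp
    ring
  | succ j ih =>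
    intro c hc b hb v hv
    have hv0 := hv 0
    have h2 : v 0 + a ≠ 0 := by positivity
    -- `u / (u + a) = v / (v + a) + (u - v) a / ((v + a) (u + a))` lowers the power of `u`
    set b' : ℕ → ℝ := fun i => b i + if i = j then c * v 0 / (v 0 + a) else 0 with hb'
    have hb'0 : ∀ i, 0 ≤ b' i := by
      intro i
      have := hb i
      simp only [hb']
      split_ifs <;> positivity
    obtain ⟨q, hq, hqe⟩ := exists_divided_difference b' hb'0 (v 0) hv0 j
    obtain ⟨coef, hcoef, e, he, h⟩ := ih (c * a / (v 0 + a)) (by positivity) q hq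
      (fun i => v (i + 1)) (fun i => hv _)
    refine ⟨fun i => Nat.casesOn i (∑ i ∈ Finset.range (j + 1), b' i * v 0 ^ i) coef, ?_, e, he,
      fun u hu => ?_⟩
    · rintro (_ | i)
      · exact Finset.sum_nonneg fun i _ => mul_nonneg (hb'0 i) (pow_nonneg hv0 i)
      · exact hcoef i
    · have h1 : u + a ≠ 0 := by positivity
      have hsum : ∑ i ∈ Finset.range (j + 1), b' i * u ^ i =
          ∑ i ∈ Finset.range (j + 1), b i * u ^ i + c * v 0 / (v 0 + a) * u ^ j := by
        simp only [hb', add_mul, Finset.sum_add_distrib, ite_mul, zero_mul]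
        simp
      have hid : c * u ^ (j + 1) / (u + a) =
          c * v 0 / (v 0 + a) * u ^ j + (u - v 0) * (c * a / (v 0 + a) * u ^ j / (u + a)) := by
        field_simp
        ring
      have hprod : ∀ i, ∏ l ∈ Finset.range (i + 1), (u - v l) =
          (u - v 0) * ∏ l ∈ Finset.range i, (u - v (l + 1)) := by
        intro i
        rw [Finset.prod_range_succ', mul_comm]
      rw [Finset.sum_range_succ' _ (j + 1), hprod (j + 1)]
      simp_rw [hprod]
      have hS : ∑ i ∈ Finset.range (j + 1),
          coef i * ((u - v 0) * ∏ l ∈ Finset.range i, (u - v (l + 1))) =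
          (u - v 0) * ∑ i ∈ Finset.range (j + 1),
            coef i * ∏ l ∈ Finset.range i, (u - v (l + 1)) := by
        rw [Finset.mul_sum]
        exact Finset.sum_congr rfl fun i _ => by ring
      rw [hS]
      simp only [Finset.range_zero, Finset.prod_empty, mul_one]
      linear_combination hid - hsum + hqe u + (u - v 0) * h u hu

end Newton

/-! ### The nodes of a tight design -/

section Nodes

open Polynomial

variable {C : Finset (Sph d)}

lemma IsSphDesign.pairSum_comp_neg (hd : 2 ≤ d) {M : ℕ} (hC : IsSphDesign d M C) (q : ℝ[X])
    (hq : q.natDegree ≤ M) : pairSum C (q.comp (-X)) = pairSum C q := by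
  rw [← sub_eq_zero, ← pairSum_sub]
  refine hC.pairSum_odd hd _ ?_ fun s => by simp
  refine (natDegree_sub_le _ _).trans (max_le ?_ hq)
  refine natDegree_comp_le.trans ?_
  simpa using hq

/-- Away from `-1`, the inner products of a tight design of odd strength are symmetric about `0`:
the nodal polynomial of `A(C) \ {-1}` is orthogonal to lower degrees for the weight `1 - s ^ 2`,
hence so is its reflection, and the two agree. -/
lemma neg_mem_innerProds (hd : 2 ≤ d) {t : ℕ} (hC : IsSphDesign d (2 * t + 1) C)
    (hA : (innerProds C).ncard = t + 1) (hA1 : (-1 : ℝ) ∈ innerProds C) {s : ℝ}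
    (hs : s ∈ innerProds C) (hs1 : s ≠ -1) : -s ∈ innerProds C := by
  classical
  set A' : Finset ℝ := (finite_innerProds C).toFinset.erase (-1) with hA'
  have hmem : ∀ α, α ∈ A' ↔ α ≠ -1 ∧ α ∈ innerProds C := by simp [hA']
  have hcard : A'.card = t := by
    rw [hA', Finset.card_erase_of_mem (by simpa using hA1), ← Set.ncard_eq_toFinset_card _ (finite_innerProds C), hA]
    rfl
  set q : ℝ[X] := ∏ α ∈ A', (X - Polynomial.C α) with hq
  have hqm : q.Monic := monic_prod_of_monic _ _ fun α _ => monic_X_sub_C α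
  have hqd : q.natDegree = t := by
    rw [hq, natDegree_prod_of_monic _ _ fun α _ => monic_X_sub_C α]
    simp [hcard]
  have hqroot : ∀ α, q.eval α = 0 ↔ α ∈ A' := by
    intro α
    rw [hq, eval_prod, Finset.prod_eq_zero_iff]
    constructor
    · rintro ⟨β, hβ, h⟩
      have : α = β := by simpa [sub_eq_zero] using h
      rwa [this]
    · exact fun h => ⟨α, h, by simp⟩
  set W : ℝ[X] := 1 - X ^ 2 with hW
  have hWq : ∀ x ∈ C, ∀ z ∈ C, (W * q).eval (ip x z) = 0 := by
    intro x hx z hz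
    rw [eval_mul, mul_eq_zero]
    by_cases hxz : x = z
    · left
      rw [← hxz, ip_self]
      simp [hW]
    by_cases h1 : ip x z = -1
    · left
      simp [hW, h1]
    · right
      exact (hqroot _).2 ((hmem _).2 ⟨h1, x, hx, z, hz, hxz, rfl⟩)
  have horth : ∀ m : ℝ[X], pairSum C (W * q * m) = 0 := by
    intro m
    refine Finset.sum_eq_zero fun x hx => Finset.sum_eq_zero fun z hz => ?_
    rw [eval_mul, hWq x hx z hz, zero_mul]
  have hWd : W.natDegree ≤ 2 := by
    refine (natDegree_sub_le _ _).trans ?_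
    simp
  have hnegd : ∀ f : ℝ[X], (f.comp (-X)).natDegree = f.natDegree := by
    intro f
    rw [natDegree_comp]
    simp
  have horth' : ∀ m : ℝ[X], m.natDegree < t → pairSum C (W * q.comp (-X) * m) = 0 := by
    intro m hm
    have h1 : W * q.comp (-X) * m = (W * q * m.comp (-X)).comp (-X) := by
      simp [hW, comp_assoc]
    rw [h1, hC.pairSum_comp_neg hd, horth]
    refine natDegree_mul_le.trans ?_
    have := natDegree_mul_le (p := W) (q := q)
    rw [hnegd]
    omega
  set D : ℝ[X] := Polynomial.C ((-1) ^ t) * q.comp (-X) - q with hD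
  have hsgn : ((-1 : ℝ) ^ t) * (-1) ^ t = 1 := by
    rw [← mul_pow]
    simp
  have hD0 : D = 0 := by
    by_contra hne
    have hdeg : D.natDegree < t := by
      rw [natDegree_lt_iff_degree_lt hne, degree_lt_iff_coeff_zero]
      intro n hn
      rw [hD, coeff_sub, coeff_C_mul]
      rcases hn.eq_or_lt with rfl | hlt
      · have h1 : q.coeff t = 1 := by rw [← hqd]; exact hqm
        have h2 : (q.comp (-X)).coeff t = (-1) ^ t := by
          rw [← hqd, ← hnegd q, coeff_natDegree, leadingCoeff_comp (by simp), hqm.leadingCoeff,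
            hnegd]
          simp
        rw [h1, h2, hsgn, sub_self]
      · rw [coeff_eq_zero_of_natDegree_lt (by rw [hnegd]; omega),
          coeff_eq_zero_of_natDegree_lt (by omega)]
        simp
    have hsum : pairSum C (W * D * D) = 0 := by
      have h1 : W * D * D = Polynomial.C ((-1) ^ t) * (W * q.comp (-X) * D) - W * q * D := by
        nth_rw 1 [hD]
        ring
      rw [h1, pairSum_sub, pairSum_C_mul, horth, horth' D hdeg]
      simp
    have hnn : ∀ x z : Sph d, 0 ≤ (W * D * D).eval (ip x z) := by
      intro x z
      rw [mul_assoc, eval_mul, eval_mul]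
      refine mul_nonneg ?_ (mul_self_nonneg _)
      have := ip_sq_le x z
      simpa [hW] using this
    refine hne (eq_zero_of_natDegree_lt_card_of_eval_eq_zero' D A' (fun α hα => ?_)
      (by omega))
    obtain ⟨hα1, x, hx, z, hz, hxz, rfl⟩ := (hmem α).1 hα
    have h1 := (Finset.sum_eq_zero_iff_of_nonneg
      fun x _ => Finset.sum_nonneg fun z _ => hnn x z).1 hsum x hx
    have h2 := (Finset.sum_eq_zero_iff_of_nonneg fun z _ => hnn x z).1 h1 z hz
    rw [mul_assoc, eval_mul, eval_mul, mul_eq_zero] at h2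
    rcases h2 with h2 | h2
    · have h3 : ip x z ^ 2 = 1 := by
        simp only [hW, eval_sub, eval_one, eval_pow, eval_X] at h2
        linarith
      exact absurd (ip_eq_one ((sq_eq_one_iff.1 h3).resolve_right hα1)) hxz
    · exact mul_self_eq_zero.1 h2
  have h1 : q.eval s = 0 := (hqroot s).2 ((hmem s).2 ⟨hs1, hs⟩)
  have h2 := congrArg (eval s) hD0
  simp only [hD, eval_sub, eval_mul, eval_C, eval_comp, eval_neg, eval_X, eval_zero, h1,
    sub_zero, mul_eq_zero] at h2
  have h3 : q.eval (-s) = 0 := h2.resolve_left (by positivity)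
  exact ((hmem _).1 ((hqroot _).1 h3)).2

/-- The squares of the nonzero inner products (including `⟨x,x⟩ = 1`) of a tight design, in
increasing order `r 0 < … < r k = 1`; here `t = 2 k + ε` with `ε ∈ {0, 1}`, and `ε = 1` whenever `0`
occurs as an inner product. -/
lemma exists_nodes (hd : 2 ≤ d) {t : ℕ} (hC : IsSphDesign d (2 * t + 1) C)
    (hA : (innerProds C).ncard = t + 1) (hA1 : (-1 : ℝ) ∈ innerProds C) :
    ∃ (k ε : ℕ) (r : ℕ → ℝ), ε ≤ 1 ∧ t = 2 * k + ε ∧ (∀ i j, i < j → j ≤ k → r i < r j) ∧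
      r k = 1 ∧ (∀ i, 0 < r i) ∧
      (∀ x ∈ C, ∀ z ∈ C, (ip x z = 0 ∧ ε = 1) ∨ ∃ i ≤ k, ip x z ^ 2 = r i) ∧
      ∀ i ≤ k, ∃ x ∈ C, ∃ z ∈ C, ip x z ^ 2 = r i := by
  classical
  set A' : Finset ℝ := (finite_innerProds C).toFinset.erase (-1) with hA'
  have hmem : ∀ α, α ∈ A' ↔ α ≠ -1 ∧ α ∈ innerProds C := by simp [hA']
  have hcard : A'.card = t := by
    rw [hA', Finset.card_erase_of_mem (by simpa using hA1), ← Set.ncard_eq_toFinset_card _ (finite_innerProds C), hA]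
    rfl
  have hneg : ∀ α ∈ A', -α ∈ A' := by
    intro α hα
    obtain ⟨h1, h2⟩ := (hmem α).1 hα
    refine (hmem _).2 ⟨?_, neg_mem_innerProds hd hC hA hA1 h2 h1⟩
    intro h
    have : α = 1 := by linarith
    exact one_notMem_innerProds C (this ▸ h2)
  have hsq : ∀ α ∈ A', α ^ 2 < 1 := by
    intro α hα
    obtain ⟨h1, x, hx, z, hz, hxz, rfl⟩ := (hmem α).1 hα
    refine lt_of_le_of_ne (ip_sq_le x z) fun h => ?_
    exact hxz (ip_eq_one ((sq_eq_one_iff.1 h).resolve_right h1))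
  set P : Finset ℝ := A'.filter (0 < ·) with hP
  set Nn : Finset ℝ := A'.filter (· < 0) with hNn
  set Z : Finset ℝ := A'.filter (· = 0) with hZ
  have hNP : Nn = P.image (fun α => -α) := by
    ext α
    simp only [hNn, hP, Finset.mem_filter, Finset.mem_image]
    constructor
    · rintro ⟨h1, h2⟩
      exact ⟨-α, ⟨hneg _ h1, by linarith⟩, by ring⟩
    · rintro ⟨β, ⟨h1, h2⟩, rfl⟩
      exact ⟨hneg _ h1, by linarith⟩
  have hNcard : Nn.card = P.card := by
    rw [hNP, Finset.card_image_of_injective _ neg_injective]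
  have hZ1 : Z.card ≤ 1 := by
    rw [Finset.card_le_one]
    intro a ha b hb
    rw [(Finset.mem_filter.1 ha).2, (Finset.mem_filter.1 hb).2]
  have ht : t = 2 * P.card + Z.card := by
    have h1 : A' = P ∪ Nn ∪ Z := by
      ext α
      simp only [hP, hNn, hZ, Finset.mem_union, Finset.mem_filter]
      have := lt_trichotomy 0 α
      grind
    have h2 : Disjoint P Nn := by
      rw [Finset.disjoint_left]
      intro α h1 h2
      simp only [hP, hNn, Finset.mem_filter] at h1 h2
      linarith
    have h3 : Disjoint (P ∪ Nn) Z := by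
      rw [Finset.disjoint_left]
      intro α h1 h2
      simp only [hP, hNn, hZ, Finset.mem_filter, Finset.mem_union] at h1 h2
      grind
    rw [← hcard, h1, Finset.card_union_of_disjoint h3, Finset.card_union_of_disjoint h2, hNcard]
    ring
  set B : Finset ℝ := insert 1 (P.image (· ^ 2)) with hB
  have hBcard : B.card = P.card + 1 := by
    rw [hB, Finset.card_insert_of_notMem, Finset.card_image_of_injOn]
    · intro a ha b hb h
      simp only [hP, Finset.coe_filter, Set.mem_ofPred_eq] at ha hb
      exact (sq_eq_sq₀ ha.2.le hb.2.le).1 h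
    · intro h
      obtain ⟨α, hα, h⟩ := Finset.mem_image.1 h
      exact (hsq α (Finset.mem_filter.1 hα).1).ne h
  set k := P.card with hk
  set r : ℕ → ℝ := fun i => B.orderEmbOfFin hBcard ⟨min i k, by omega⟩ with hr
  have hrB : ∀ i, r i ∈ B := fun i => Finset.orderEmbOfFin_mem _ _ _
  have hBr : ∀ b ∈ B, ∃ i ≤ k, b = r i := by
    intro b hb
    have : b ∈ Set.range (B.orderEmbOfFin hBcard) := by
      rw [Finset.range_orderEmbOfFin]
      exact hb
    obtain ⟨i, rfl⟩ := this
    refine ⟨i, by omega, ?_⟩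
    simp only [hr]
    congr 1
    ext
    simp
    omega
  have hmono : ∀ i j, i < j → j ≤ k → r i < r j := by
    intro i j hij hj
    simp only [hr]
    rw [OrderEmbedding.lt_iff_lt, Fin.mk_lt_mk]
    omega
  have hle1 : ∀ b ∈ B, b ≤ 1 := by
    intro b hb
    rcases Finset.mem_insert.1 hb with rfl | hb
    · exact le_rfl
    · obtain ⟨α, hα, rfl⟩ := Finset.mem_image.1 hb
      exact (hsq α (Finset.mem_filter.1 hα).1).le
  have hrk : r k = 1 := by
    refine le_antisymm (hle1 _ (hrB k)) ?_
    obtain ⟨i, hi, h⟩ := hBr 1 (Finset.mem_insert_self _ _)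
    rcases hi.eq_or_lt with rfl | hlt
    · exact h.le
    · rw [h]
      exact (hmono i k hlt le_rfl).le
  obtain ⟨x₀, hx₀⟩ := hC.1
  refine ⟨k, Z.card, r, hZ1, ht, hmono, hrk, fun i => ?_, ?_, ?_⟩
  · rcases Finset.mem_insert.1 (hrB i) with h | h
    · rw [h]
      exact one_pos
    · obtain ⟨α, hα, h⟩ := Finset.mem_image.1 h
      rw [← h]
      have := (Finset.mem_filter.1 hα).2
      positivity
  · intro x hx z hz
    by_cases hxz : x = z
    · right
      refine ⟨k, le_rfl, ?_⟩
      rw [← hxz, ip_self, hrk, one_pow]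
    by_cases h1 : ip x z = -1
    · right
      refine ⟨k, le_rfl, ?_⟩
      rw [h1, hrk]
      norm_num
    have hmA : ip x z ∈ A' := (hmem _).2 ⟨h1, x, hx, z, hz, hxz, rfl⟩
    rcases lt_trichotomy 0 (ip x z) with h | h | h
    · right
      obtain ⟨i, hi, h'⟩ := hBr (ip x z ^ 2) (Finset.mem_insert_of_mem
        (Finset.mem_image_of_mem _ (Finset.mem_filter.2 ⟨hmA, h⟩)))
      exact ⟨i, hi, h'⟩
    · left
      refine ⟨h.symm, le_antisymm hZ1 (Finset.card_pos.2 ⟨ip x z, ?_⟩)⟩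
      exact Finset.mem_filter.2 ⟨hmA, h.symm⟩
    · right
      obtain ⟨i, hi, h'⟩ := hBr ((-ip x z) ^ 2) (Finset.mem_insert_of_mem
        (Finset.mem_image_of_mem _ (Finset.mem_filter.2 ⟨hneg _ hmA, by linarith⟩)))
      exact ⟨i, hi, by rw [← h']; ring⟩
  · intro i _
    rcases Finset.mem_insert.1 (hrB i) with h | h
    · exact ⟨x₀, hx₀, x₀, hx₀, by rw [h, ip_self, one_pow]⟩
    · obtain ⟨α, hα, h⟩ := Finset.mem_image.1 h
      obtain ⟨_, x, hx, z, hz, _, rfl⟩ := (hmem α).1 (Finset.mem_filter.1 hα).1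
      exact ⟨x, hx, z, hz, h⟩

end Nodes

/-! ### Energy bound for `s ^ (2 t) / (s ^ 2 + a)` -/

section Rational

open Polynomial

variable {C : Finset (Sph d)}

lemma energy_eq_integral_prod {μ : Measure (Sph d)} [IsProbabilityMeasure μ] {f : ℝ → ℝ}
    (hf : Continuous f) : energy f μ = ∫ z, f (ip z.1 z.2) ∂(μ.prod μ) := by
  rw [integral_prod]
  · rfl
  · exact (hf.comp continuous_ip).integrable_of_hasCompactSupport
      (HasCompactSupport.of_compactSpace _)

lemma energy_mono {μ : Measure (Sph d)} [IsProbabilityMeasure μ] {f g : ℝ → ℝ}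
    (hf : Continuous f) (hg : Continuous g) (h : ∀ s, |s| ≤ 1 → f s ≤ g s) :
    energy f μ ≤ energy g μ := by
  rw [energy_eq_integral_prod hf, energy_eq_integral_prod hg]
  refine integral_mono ?_ ?_ fun z => h _ (abs_ip_le _ _)
  · exact (hf.comp continuous_ip).integrable_of_hasCompactSupport
      (HasCompactSupport.of_compactSpace _)
  · exact (hg.comp continuous_ip).integrable_of_hasCompactSupport
      (HasCompactSupport.of_compactSpace _)

/-- The multiplicity of `r i` among the squared inner products of pairs from `C`, weighted by
`r i ^ ε`. -/
def nodeWeight (C : Finset (Sph d)) (ε : ℕ) (r : ℕ → ℝ) (i : ℕ) : ℝ :=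
  ∑ x ∈ C, ∑ z ∈ C, if ip x z ^ 2 = r i then r i ^ ε else 0

lemma pairSum_even_eq_nodeSum {k ε : ℕ} {r : ℕ → ℝ}
    (hr : ∀ i j, i < j → j ≤ k → r i < r j) (hpos : ∀ i, 0 < r i)
    (hcov : ∀ x ∈ C, ∀ z ∈ C, (ip x z = 0 ∧ ε = 1) ∨ ∃ i ≤ k, ip x z ^ 2 = r i) (P : ℝ[X]) :
    pairSum C (X ^ (2 * ε) * P.comp (X ^ 2)) = nodeSum k r (nodeWeight C ε r) P := by
  have hR : nodeSum k r (nodeWeight C ε r) P = ∑ x ∈ C, ∑ z ∈ C,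
      ∑ i ∈ Finset.range (k + 1), if ip x z ^ 2 = r i then r i ^ ε * P.eval (r i) else 0 := by
    simp only [nodeSum, nodeWeight, Finset.sum_mul, ite_mul, zero_mul]
    rw [Finset.sum_comm]
    exact Finset.sum_congr rfl fun x _ => by rw [Finset.sum_comm]
  rw [hR]
  refine Finset.sum_congr rfl fun x hx => Finset.sum_congr rfl fun z hz => ?_
  simp only [eval_mul, eval_pow, eval_X, eval_comp, pow_mul]
  rcases hcov x hx z hz with ⟨h0, rfl⟩ | ⟨i, hi, h⟩
  · rw [Finset.sum_eq_zero]
    · simp [h0]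
    · intro i _
      rw [if_neg]
      rw [h0]
      simpa using (hpos i).ne
  · rw [Finset.sum_eq_single i]
    · rw [if_pos h, h]
    · intro j hj hji
      rw [if_neg]
      rw [h]
      rcases lt_or_gt_of_ne hji with hlt | hlt
      · exact (hr j i hlt hi).ne'
      · exact (hr i j hlt (Finset.mem_range_succ_iff.1 hj)).ne
    · intro hn
      exact absurd (Finset.mem_range_succ_iff.2 hi) hn

lemma nodeWeight_pos {k ε : ℕ} {r : ℕ → ℝ} (hpos : ∀ i, 0 < r i)
    (hex : ∀ i ≤ k, ∃ x ∈ C, ∃ z ∈ C, ip x z ^ 2 = r i) {i : ℕ} (hi : i ≤ k) :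
    0 < nodeWeight C ε r i := by
  obtain ⟨x, hx, z, hz, h⟩ := hex i hi
  have hnn : ∀ x z : Sph d, 0 ≤ if ip x z ^ 2 = r i then r i ^ ε else 0 := by
    intro x z
    have := hpos i
    split_ifs <;> positivity
  refine Finset.sum_pos' (fun x _ => Finset.sum_nonneg fun z _ => hnn x z) ⟨x, hx, ?_⟩
  refine Finset.sum_pos' (fun z _ => hnn x z) ⟨z, hz, ?_⟩
  rw [if_pos h]
  exact pow_pos (hpos i) ε

/-- Orthogonal polynomials for the squared inner products, transported back to the sphere by
`s ↦ s ^ ε P(s ^ 2)`, are positive definite. -/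
lemma isPosKernel_of_isOrthPoly (hd : 2 ≤ d) {t : ℕ} (hC : IsSphDesign d (2 * t + 1) C)
    (hA : (innerProds C).ncard = t + 1) {k ε : ℕ} {r : ℕ → ℝ} (hε : ε ≤ 1) (ht : t = 2 * k + ε)
    (hr : ∀ i j, i < j → j ≤ k → r i < r j) (hrk : r k = 1) (hpos : ∀ i, 0 < r i)
    (hcov : ∀ x ∈ C, ∀ z ∈ C, (ip x z = 0 ∧ ε = 1) ∨ ∃ i ≤ k, ip x z ^ 2 = r i)
    (hex : ∀ i ≤ k, ∃ x ∈ C, ∃ z ∈ C, ip x z ^ 2 = r i) {n : ℕ} (hn : n ≤ k) {P : ℝ[X]}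
    (hP : IsOrthPoly k r (nodeWeight C ε r) n P) : IsPosKernel d (X ^ ε * P.comp (X ^ 2)) := by
  have hcm : (P.comp (X ^ 2)).Monic := hP.1.comp (monic_X_pow 2) (by simp)
  have hdeg : (X ^ ε * P.comp (X ^ 2)).natDegree = ε + n * 2 := by
    rw [(monic_X_pow ε).natDegree_mul hcm, natDegree_comp, natDegree_X_pow, natDegree_X_pow,
      hP.2.1]
  refine isPosKernel_of_orth hd hC hA ((monic_X_pow ε).mul hcm) hdeg (by omega) ?_ ?_
  · -- by linearity it is enough to pair with monomials
    have hmono : ∀ i < ε + n * 2, pairSum C (X ^ ε * P.comp (X ^ 2) * X ^ i) = 0 := by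
      intro i hi
      rcases Nat.even_or_odd (ε + i) with he | ho
      · obtain ⟨l, rfl⟩ : ∃ l, i = ε + 2 * l := by
          obtain ⟨m, hm⟩ := he
          exact ⟨m - ε, by omega⟩
        have h1 : X ^ ε * P.comp (X ^ 2) * X ^ (ε + 2 * l) =
            X ^ (2 * ε) * (P * X ^ l).comp (X ^ 2) := by
          simp only [mul_comp, X_pow_comp]
          ring
        rw [h1, pairSum_even_eq_nodeSum hr hpos hcov]
        refine hP.2.2 _ ?_
        rw [degree_X_pow]
        exact_mod_cast (by omega : l < n)
      · refine hC.pairSum_odd hd _ ?_ ?_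
        · refine natDegree_mul_le.trans ?_
          rw [hdeg, natDegree_X_pow]
          omega
        · intro s
          simp only [eval_mul, eval_pow, eval_X, eval_comp, neg_sq]
          have : (-s) ^ ε * (-s) ^ i = -(s ^ ε * s ^ i) := by
            rw [← pow_add, ho.neg_pow, pow_add]
          linear_combination (P.eval (s ^ 2)) * this
    intro m hm
    have : pairSum C (X ^ ε * P.comp (X ^ 2) * m) = ∑ i ∈ Finset.range (ε + n * 2),
        m.coeff i * pairSum C (X ^ ε * P.comp (X ^ 2) * X ^ i) := by
      simp only [pairSum, Finset.mul_sum]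
      rw [Finset.sum_comm (s := Finset.range (ε + n * 2))]
      refine Finset.sum_congr rfl fun x _ => ?_
      rw [Finset.sum_comm (s := Finset.range (ε + n * 2))]
      refine Finset.sum_congr rfl fun z _ => ?_
      rw [eval_mul, eval_eq_sum_range' hm, Finset.mul_sum]
      refine Finset.sum_congr rfl fun i _ => ?_
      simp only [eval_mul, eval_pow, eval_X]
      ring
    rw [this]
    refine Finset.sum_eq_zero fun i hi => ?_
    rw [hmono i (Finset.mem_range.1 hi), mul_zero]
  · have := hP.eval_last_nonneg hr (fun i hi => nodeWeight_pos hpos hex hi) (by omega)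
    rw [hrk] at this
    simpa using this

/-- The interpolation nodes in the variable `u = s ^ 2`: `0` once if `ε = 1`, followed by every
`r i` twice. Interpolation uses the first `t + 1 = ε + 2 k + 1` of them, so that the largest node
`r k = 1` is taken once. -/
def doubledNode (ε : ℕ) (r : ℕ → ℝ) (l : ℕ) : ℝ := if l < ε then 0 else r ((l - ε) / 2)

lemma prod_doubledNode_even {ε : ℕ} (hε : ε ≤ 1) (r : ℕ → ℝ) (j : ℕ) :
    ∏ l ∈ Finset.range (ε + 2 * j), (X - Polynomial.C (doubledNode ε r l)) =
      X ^ ε * (∏ i ∈ Finset.range j, (X - Polynomial.C (r i))) ^ 2 := by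
  induction j with
  | zero => interval_cases ε <;> simp [doubledNode]
  | succ j ih =>
    have h1 : doubledNode ε r (ε + 2 * j) = r j := by
      simp [doubledNode]
    have h2 : doubledNode ε r (ε + 2 * j + 1) = r j := by
      have h3 : (ε + 2 * j + 1 - ε) / 2 = j := by omega
      rw [doubledNode, if_neg (by omega), h3]
    rw [show ε + 2 * (j + 1) = ε + 2 * j + 1 + 1 by ring, Finset.prod_range_succ,
      Finset.prod_range_succ, ih, h1, h2, Finset.prod_range_succ]
    ring

lemma prod_doubledNode_odd {ε : ℕ} (hε : ε ≤ 1) (r : ℕ → ℝ) (j : ℕ) :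
    ∏ l ∈ Finset.range (ε + 2 * j + 1), (X - Polynomial.C (doubledNode ε r l)) =
      X ^ ε * (∏ i ∈ Finset.range j, (X - Polynomial.C (r i))) ^ 2 * (X - Polynomial.C (r j)) := by
  have h1 : doubledNode ε r (ε + 2 * j) = r j := by
    simp [doubledNode]
  rw [Finset.prod_range_succ, prod_doubledNode_even hε, h1]

/-- A tight design minimizes the energy of `s ^ (2 t) / (s ^ 2 + a)`: its Hermite interpolant at the
inner products of the design is positive definite and lies below it. -/
lemma energy_rational_le (hd : 2 ≤ d) {t : ℕ} (hC : IsSphDesign d (2 * t + 1) C)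
    (hA : (innerProds C).ncard = t + 1) (hA1 : (-1 : ℝ) ∈ innerProds C) {a : ℝ} (ha : 0 < a)
    (μ : Measure (Sph d)) [IsProbabilityMeasure μ] :
    energy (fun s => s ^ (2 * t) / (s ^ 2 + a)) (unifOn C) ≤
      energy (fun s => s ^ (2 * t) / (s ^ 2 + a)) μ := by
  obtain ⟨k, ε, r, hε, ht, hr, hrk, hpos, hcov, hex⟩ := exists_nodes hd hC hA hA1
  have hR : ∀ j ≤ k, IsPosKernel d
      (X ^ ε * (∏ i ∈ Finset.range j, (X - Polynomial.C (r i))).comp (X ^ 2)) := by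
    refine prod_nodes_mem_cone (fun P => IsPosKernel d (X ^ ε * P.comp (X ^ 2))) ?_ ?_ ?_ r k
      (nodeWeight C ε r) hr (fun i hi => nodeWeight_pos hpos hex hi) ?_
    · simpa using IsPosKernel.zero
    · intro P Q hP hQ
      simpa [mul_add] using hP.add hQ
    · intro c P hc hP
      have := hP.C_mul hc
      rwa [mul_comp, C_comp, mul_left_comm]
    · intro n hn P hP
      exact isPosKernel_of_isOrthPoly hd hC hA hε ht hr hrk hpos hcov hex hn hP
  have hN : ∀ i ≤ t, IsPosKernel d
      ((∏ l ∈ Finset.range i, (X - Polynomial.C (doubledNode ε r l))).comp (X ^ 2)) := by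
    intro i hi
    rcases Nat.eq_zero_or_pos i with rfl | hi0
    · simpa using IsPosKernel.one
    obtain ⟨j, hj | hj⟩ : ∃ j, i = ε + 2 * j ∨ i = ε + 2 * j + 1 := ⟨(i - ε) / 2, by omega⟩
    · subst hj
      have h1 := hR j (by omega)
      convert h1.mul h1 using 1
      rw [prod_doubledNode_even hε]
      simp only [mul_comp, pow_comp, X_comp]
      ring
    · subst hj
      convert (hR j (by omega)).mul (hR (j + 1) (by omega)) using 1
      rw [prod_doubledNode_odd hε, Finset.prod_range_succ]
      simp only [mul_comp, pow_comp, X_comp]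
      ring
  have hv : ∀ i, 0 ≤ doubledNode ε r i := by
    intro i
    unfold doubledNode
    split_ifs
    · exact le_rfl
    · exact (hpos _).le
  obtain ⟨coef, hcoef, e, he, hInt⟩ := exists_newton ha t 1 zero_le_one (fun _ => 0)
    (fun _ => le_rfl) (doubledNode ε r) hv
  set H : ℝ[X] := ∑ i ∈ Finset.range (t + 1), Polynomial.C (coef i) *
    (∏ l ∈ Finset.range i, (X - Polynomial.C (doubledNode ε r l))).comp (X ^ 2) with hH
  have hHpos : IsPosKernel d H := IsPosKernel.sum _ _ fun i hi =>
    (hN i (Finset.mem_range_succ_iff.1 hi)).C_mul (hcoef i)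
  have hHdeg : H.natDegree ≤ 2 * t + 1 := by
    refine natDegree_sum_le_of_forall_le _ _ fun i hi => (natDegree_C_mul_le _ _).trans ?_
    rw [natDegree_comp, natDegree_X_pow, natDegree_prod_of_monic _ _ fun α _ => monic_X_sub_C _]
    have := Finset.mem_range_succ_iff.1 hi
    simp
    omega
  set f : ℝ → ℝ := fun s => s ^ (2 * t) / (s ^ 2 + a) with hf
  have hfc : Continuous f := by
    refine Continuous.div (by fun_prop) (by fun_prop) fun s => ?_
    positivity
  -- the remainder of the interpolation has a sign on `[-1, 1]`
  have hfH : ∀ s : ℝ, f s = H.eval s + e * ((s ^ 2) ^ ε *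
      (∏ i ∈ Finset.range k, (s ^ 2 - r i)) ^ 2 * (1 - s ^ 2) / (s ^ 2 + a)) := by
    intro s
    have h1 := hInt (s ^ 2) (sq_nonneg s)
    have h2 := congrArg (eval (s ^ 2)) (prod_doubledNode_odd hε r k)
    rw [show ε + 2 * k + 1 = t + 1 by omega] at h2
    simp only [eval_prod, eval_sub, eval_X, eval_C, eval_mul, eval_pow, hrk] at h2
    rw [h2] at h1
    have h3 : H.eval s = ∑ i ∈ Finset.range (t + 1), coef i *
        ∏ l ∈ Finset.range i, (s ^ 2 - doubledNode ε r l) := by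
      simp [hH, eval_finsetSum, eval_prod, eval_comp]
    rw [← h3] at h1
    simp only [zero_mul, Finset.sum_const_zero, add_zero, one_mul, ← pow_mul] at h1
    simp only [hf]
    rw [h1]
    ring
  have hle : ∀ s, |s| ≤ 1 → H.eval s ≤ f s := by
    intro s hs
    have : s ^ 2 ≤ 1 := by
      rw [← sq_abs]
      exact pow_le_one₀ (abs_nonneg _) hs
    have h0 : 0 ≤ 1 - s ^ 2 := by linarith
    rw [hfH s]
    have : 0 ≤ e * ((s ^ 2) ^ ε *
      (∏ i ∈ Finset.range k, (s ^ 2 - r i)) ^ 2 * (1 - s ^ 2) / (s ^ 2 + a)) := by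
      positivity
    linarith
  have heq : ∀ x ∈ C, ∀ z ∈ C, f (ip x z) = H.eval (ip x z) := by
    intro x hx z hz
    rw [hfH]
    have : (ip x z ^ 2) ^ ε * (∏ i ∈ Finset.range k, (ip x z ^ 2 - r i)) ^ 2 *
        (1 - ip x z ^ 2) = 0 := by
      rcases hcov x hx z hz with ⟨h0, rfl⟩ | ⟨i, hi, h⟩
      · simp [h0]
      · rcases hi.eq_or_lt with rfl | hlt
        · rw [h, hrk]
          simp
        · have : ∏ j ∈ Finset.range k, (ip x z ^ 2 - r j) = 0 :=
            Finset.prod_eq_zero (Finset.mem_range.2 hlt) (by rw [h, sub_self])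
          rw [this]
          simp
    rw [this]
    simp
  calc energy f (unifOn C) = energy (fun s => H.eval s) (unifOn C) := by
        rw [energy_unifOn _ _ hfc, energy_unifOn _ _ H.continuous]
        congr 2
        exact Finset.sum_congr rfl fun x hx => Finset.sum_congr rfl fun z hz => heq x hx z hz
    _ ≤ energy (fun s => H.eval s) μ := hC.energy_le hd H hHdeg hHpos μ
    _ ≤ energy f μ := energy_mono H.continuous hfc hle

end Rational

/-! ### The power `|s| ^ p` as a mixture -/

section Mixture

/-- Mixture representation of the energy of `|s| ^ (2 t - 2 + 2 θ)`, `0 < θ < 1`, in terms of the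
energies of `s ^ (2 t) / (s ^ 2 + a)` over `a > 0`, with a constant that does not depend on the
measure. -/
lemma energy_eq_mixture {t : ℕ} (ht : 1 ≤ t) {θ : ℝ} (hθ : θ ∈ Set.Ioo (0 : ℝ) 1)
    (ν : Measure (Sph d)) [IsProbabilityMeasure ν] :
    IntegrableOn (fun a : ℝ => a ^ (θ - 1) * energy (fun s => s ^ (2 * t) / (s ^ 2 + a)) ν)
      (Set.Ioi 0) ∧
    energy (fun s => |s| ^ (2 * (t : ℝ) - 2 + 2 * θ)) ν =
      (∫ a in Set.Ioi 0, Real.rpowIntegrand₀₁ θ a 1)⁻¹ *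
        ∫ a in Set.Ioi 0, a ^ (θ - 1) * energy (fun s => s ^ (2 * t) / (s ^ 2 + a)) ν := by
  set K : ℝ := (∫ a in Set.Ioi 0, Real.rpowIntegrand₀₁ θ a 1)⁻¹ with hK
  set g : ℝ → ℝ → ℝ := fun a s => a ^ (θ - 1) * (s ^ (2 * t) / (s ^ 2 + a)) with hg
  obtain ⟨n, rfl⟩ : ∃ n, t = n + 1 := ⟨t - 1, by omega⟩
  have hgr : ∀ a : ℝ, 0 < a → ∀ s : ℝ,
      g a s = (s ^ 2) ^ n * Real.rpowIntegrand₀₁ θ a (s ^ 2) := by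
    intro a ha s
    rw [Real.rpowIntegrand₀₁_eq_pow_div hθ ha.le (sq_nonneg s)]
    simp only [hg]
    rw [pow_mul, pow_succ, add_comm (s ^ 2) a]
    ring
  have hpow : ∀ s : ℝ, |s| ^ (2 * ((n + 1 : ℕ) : ℝ) - 2 + 2 * θ) =
      K * ∫ a in Set.Ioi 0, g a s := by
    intro s
    have h1 : ∫ a in Set.Ioi 0, g a s =
        (s ^ 2) ^ n * ∫ a in Set.Ioi 0, Real.rpowIntegrand₀₁ θ a (s ^ 2) := by
      rw [← integral_const_mul]
      exact setIntegral_congr_fun measurableSet_Ioi fun a ha => hgr a ha s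
    have h2 := Real.rpow_eq_const_mul_integral hθ (sq_nonneg s)
    have hθ0 := hθ.1
    have h3 : (2 * ((n + 1 : ℕ) : ℝ) - 2 + 2 * θ) = ((2 * n : ℕ) : ℝ) + 2 * θ := by
      push_cast
      ring
    rw [h1, mul_left_comm, ← h2, h3, Real.rpow_add' (abs_nonneg s) (by positivity),
      Real.rpow_natCast, pow_mul, sq_abs, Real.rpow_mul (abs_nonneg s)]
    congr 2
    rw [Real.rpow_two, sq_abs]
  have hfc : Continuous fun s : ℝ => |s| ^ (2 * ((n + 1 : ℕ) : ℝ) - 2 + 2 * θ) := by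
    refine continuous_abs.rpow_const fun s => Or.inr ?_
    have := hθ.1
    push_cast
    have : (0 : ℝ) ≤ n := Nat.cast_nonneg n
    linarith
  have hInt : Integrable (Function.uncurry fun (z : Sph d × Sph d) (a : ℝ) => g a (ip z.1 z.2))
      ((ν.prod ν).prod (volume.restrict (Set.Ioi 0))) := by
    have hdom := Integrable.comp_snd (Real.integrableOn_rpowIntegrand₀₁_Ioi hθ zero_le_one)
      (ν.prod ν)
    refine hdom.mono' ?_ ?_
    · have hm : Measurable fun w : (Sph d × Sph d) × ℝ => ip w.1.1 w.1.2 :=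
        continuous_ip.measurable.comp measurable_fst
      refine Measurable.aestronglyMeasurable ?_
      exact (measurable_snd.pow_const _).mul
        ((hm.pow_const _).div ((hm.pow_const _).add measurable_snd))
    · have hpos : ∀ᵐ a ∂(volume.restrict (Set.Ioi (0 : ℝ))), 0 < a :=
        ae_restrict_mem measurableSet_Ioi
      filter_upwards [Measure.quasiMeasurePreserving_snd.ae hpos] with w hw
      have h1 := ip_sq_le w.1.1 w.1.2
      have h2 := Real.rpowIntegrand₀₁_nonneg hθ.1 hw.le (sq_nonneg (ip w.1.1 w.1.2))
      simp only [Function.uncurry]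
      rw [hgr _ hw, Real.norm_eq_abs, abs_of_nonneg (by positivity)]
      calc (ip w.1.1 w.1.2 ^ 2) ^ n * Real.rpowIntegrand₀₁ θ w.2 (ip w.1.1 w.1.2 ^ 2)
          ≤ 1 * Real.rpowIntegrand₀₁ θ w.2 (ip w.1.1 w.1.2 ^ 2) := by
            gcongr
            exact pow_le_one₀ (sq_nonneg _) h1
        _ ≤ Real.rpowIntegrand₀₁ θ w.2 1 := by
            rw [one_mul]
            exact Real.rpowIntegrand₀₁_monotoneOn hθ hw.le (Set.mem_Ici.2 (sq_nonneg _))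
              (Set.mem_Ici.2 zero_le_one) h1
  have hen : ∀ a ∈ Set.Ioi (0 : ℝ), ∫ z, g a (ip z.1 z.2) ∂(ν.prod ν) =
      a ^ (θ - 1) * energy (fun s => s ^ (2 * (n + 1)) / (s ^ 2 + a)) ν := by
    intro a ha
    have ha' : 0 < a := ha
    rw [energy_eq_integral_prod, ← integral_const_mul]
    refine Continuous.div (by fun_prop) (by fun_prop) fun s => ?_
    positivity
  constructor
  · have h := hInt.integral_prod_right
    refine IntegrableOn.congr_fun (f := fun a => ∫ z, g a (ip z.1 z.2) ∂(ν.prod ν)) h hen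
      measurableSet_Ioi
  · rw [energy_eq_integral_prod hfc]
    simp_rw [hpow]
    rw [integral_const_mul, integral_integral_swap hInt,
      setIntegral_congr_fun measurableSet_Ioi hen]

end Mixture

/-- If `C ⊆ S^{d-1}` is a tight spherical `(2t+1)`-design (so `A(C)` has
exactly `t+1` elements, one of which is `-1`), then for every `p` with
`2t-2 ≤ p ≤ 2t`, `p > 0`, the uniform measure on `C` minimizes the `p`-frame energy
`I_p(μ) = ∫∫ |⟨x,y⟩|^p dμ dμ` over all Borel probability measures on `S^{d-1}`. -/
theorem tight_design_minimizes_p_frame_energy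
    {d t : ℕ} (hd : 2 ≤ d) (ht : 1 ≤ t) (C : Finset (Sph d))
    (hdes : IsSphDesign d (2 * t + 1) C)
    (hA : (innerProds C).ncard = t + 1) (hA1 : (-1 : ℝ) ∈ innerProds C)
    (p : ℝ) (hp0 : 0 < p) (hp1 : 2 * (t : ℝ) - 2 ≤ p) (hp2 : p ≤ 2 * (t : ℝ))
    (μ : Measure (Sph d)) [IsProbabilityMeasure μ] :
    energy (fun s => |s| ^ p) (unifOn C) ≤ energy (fun s => |s| ^ p) μ := by
  have hprob := isProbabilityMeasure_unifOn hdes.1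
  -- even exponents: the energy is that of a positive definite monomial
  have heven : ∀ n : ℕ, n ≤ t → p = 2 * (n : ℝ) →
      energy (fun s => |s| ^ p) (unifOn C) ≤ energy (fun s => |s| ^ p) μ := by
    intro n hn hpn
    have hfun : (fun s : ℝ => |s| ^ p) =
        fun s => ((Polynomial.X : Polynomial ℝ) ^ (2 * n)).eval s := by
      funext s
      rw [hpn, show (2 * (n : ℝ)) = ((2 * n : ℕ) : ℝ) by push_cast; ring, Real.rpow_natCast,
        pow_mul, sq_abs]
      simp [pow_mul]
    rw [hfun]
    refine hdes.energy_le hd _ ?_ (IsPosKernel.X.pow _) μ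
    rw [Polynomial.natDegree_X_pow]
    omega
  rcases hp2.eq_or_lt with h | hlt
  · exact heven t le_rfl h
  rcases hp1.eq_or_lt with h | hgt
  · refine heven (t - 1) (by omega) ?_
    rw [← h]
    push_cast [ht]
    ring
  set θ : ℝ := p / 2 - t + 1 with hθ
  have hθm : θ ∈ Set.Ioo (0 : ℝ) 1 := ⟨by rw [hθ]; linarith, by rw [hθ]; linarith⟩
  have hpθ : p = 2 * (t : ℝ) - 2 + 2 * θ := by
    rw [hθ]
    ring
  obtain ⟨hi1, he1⟩ := energy_eq_mixture ht hθm (unifOn C)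
  obtain ⟨hi2, he2⟩ := energy_eq_mixture ht hθm μ
  rw [hpθ, he1, he2]
  refine mul_le_mul_of_nonneg_left ?_ ?_
  · refine setIntegral_mono_on hi1 hi2 measurableSet_Ioi fun a ha => ?_
    exact mul_le_mul_of_nonneg_left (energy_rational_le hd hdes hA hA1 ha μ)
      (Real.rpow_nonneg (le_of_lt ha) _)
  · exact inv_nonneg.2 (setIntegral_nonneg measurableSet_Ioi fun a ha =>
      Real.rpowIntegrand₀₁_nonneg hθm.1 (le_of_lt ha) zero_le_one)
end
end

section
/- Let φ = (1+√5)/2 and let C ⊂ S^3 ⊂ ℝ^4 be the 120-point vertex set of the 600-cell: C consists of (a) the 8 vectors ±e_i (standard basis vectors and their negatives), (b) the 16 vectors (±1/2, ±1/2, ±1/2, ±1/2) with all sign choices, and (c) the 96 vectors obtained from (φ/2, 1/2, 1/(2φ), 0) by applying all sign changes to the three nonzero coordinates followed by all even permutations of the four coordinates. Then for every real p with 8 ≤ p ≤ 10, the uniform probability measure μ_C = (1/120) Σ_{x∈C} δ_x minimizes the p-frame energy I_p(μ) = ∫∫ |⟨x,y⟩|^p dμ(x)dμ(y) over all Borel probability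 measures μ on S^3. -/
/-!
The proof is Delsarte's linear programming method, in the variable `z = 4 t²` where `t = ⟨x, y⟩`.

Positive definiteness: identify `S³` with `SU(2)`. The polynomial `U_{2k}(t) = cheb k z` is the
character of the symmetric power of order `2k` at `x y⁻¹`, hence a combination with nonnegative
coefficients of products `f(x) * conj (f(y))` of matrix coefficients (`cheb_inner`). So its energy
is nonnegative for every measure (`energy_cheb_nonneg`).

The 600-cell: an enumeration of the vertices over `ℤ[√5]` shows that each vertex sees the values
`z = 4, (3 + √5)/2, 1, (3 - √5)/2, 0` with multiplicities `1, 12, 20, 12, 15` up to sign (`gram`,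
`energy_unifOn`). It follows that `cheb k` has energy zero for the 600-cell when `1 ≤ k ≤ 9` and
`k ≠ 6` (`quadrature`). Consequently, if `h = ∑ c_k cheb k` with `k ≤ 9`, `c_k ≥ 0` and `c_6 = 0`
satisfies `h ≤ g` on `[0, 4]`, with equality at the five values above, then the 600-cell minimizes
the energy of `g` (`lp_bound`).

The certificate: `|t| ^ p` is a multiple of `z ^ (p/2)`. For `p = 8` and `p = 10` this is a
polynomial, which is its own certificate. For `8 < p < 10`, put `α = p/2 - 4`; up to a positive
constant, `z ^ α` is the integral over `r > 0` of `r ^ (α - 1) z / (z + r)`. For each `r > 0` an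
explicit certificate exists for `z⁵ / (z + r)` (`num`, `num_identity`), and its coefficients are
integrated against `r ^ (α - 1)` to give one for `z ^ (4 + α)` (`mixCoeff`).
-/

open MeasureTheory Metric
open scoped RealInnerProductSpace

noncomputable section

variable {d : ℕ}

/-- The golden ratio `(1 + √5)/2`. -/
def φgold : ℝ := (1 + Real.sqrt 5) / 2

/-- The 120-point vertex set of the `600`-cell in `ℝ⁴`: the vectors `±e_i`; the vectors
`(±1/2, ±1/2, ±1/2, ±1/2)`; and the vectors obtained from `(φ/2, 1/2, 1/(2φ), 0)` by all
sign changes of the nonzero coordinates followed by all even permutations of the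
coordinates. -/
def cell600 : Set (EuclideanSpace ℝ (Fin 4)) :=
  {v | (∃ (i : Fin 4) (ε : ℝ), (ε = 1 ∨ ε = -1) ∧ v = ε • EuclideanSpace.single i (1 : ℝ)) ∨
       (∀ i, v i = 1 / 2 ∨ v i = -(1 / 2)) ∨
       (∃ (ε : Fin 4 → ℝ) (π : Equiv.Perm (Fin 4)),
         (∀ i, ε i = 1 ∨ ε i = -1) ∧ Equiv.Perm.sign π = 1 ∧
         ∀ i, v i = ε i * (![φgold / 2, 1 / 2, 1 / (2 * φgold), 0] : Fin 4 → ℝ) (π i))}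

/-! ### The 600-cell -/

/-- Vectors of `ℝ⁴` with coordinates in `ℤ[√5]`. A quadruple stands for four times the actual
vector (see `toE`), so that all vertices of the `600`-cell are of this form. -/
abbrev Vec := ℤ√5 × ℤ√5 × ℤ√5 × ℤ√5

/-- The standard bilinear form on `Vec`. -/
def dot (v w : Vec) : ℤ√5 :=
  v.1 * w.1 + v.2.1 * w.2.1 + v.2.2.1 * w.2.2.1 + v.2.2.2 * w.2.2.2

/-- The twelve even permutations of the coordinates of a vector. -/
def evenPerms : Vec → List Vec
  | (a, b, c, d) =>
    [(a, b, c, d), (a, c, d, b), (a, d, b, c), (b, a, d, c), (b, d, c, a), (b, c, a, d),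
     (c, d, a, b), (c, a, b, d), (c, b, d, a), (d, c, b, a), (d, b, a, c), (d, a, c, b)]

/-- One vertex out of each of the 60 antipodal pairs of vertices of the `600`-cell, scaled by `4`.
The entries `⟨1, 1⟩` and `⟨-1, 1⟩` are `1 + √5 = 2φ` and `√5 - 1 = 2/φ`. -/
def half : List Vec :=
  let o : ℤ√5 := ⟨0, 0⟩
  let h : ℤ√5 := ⟨2, 0⟩
  let k : ℤ√5 := ⟨-2, 0⟩
  let i : ℤ√5 := ⟨4, 0⟩
  [(i, o, o, o), (o, i, o, o), (o, o, i, o), (o, o, o, i),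
   (h, h, h, h), (h, h, h, k), (h, h, k, h), (h, h, k, k),
   (h, k, h, h), (h, k, h, k), (h, k, k, h), (h, k, k, k)] ++
  evenPerms (⟨1, 1⟩, h, ⟨-1, 1⟩, o) ++ evenPerms (⟨1, 1⟩, h, ⟨1, -1⟩, o) ++
  evenPerms (⟨1, 1⟩, k, ⟨-1, 1⟩, o) ++ evenPerms (⟨1, 1⟩, k, ⟨1, -1⟩, o)

/-- All 120 vertices. -/
def full : List Vec := half ++ half.map fun v => -v

set_option maxRecDepth 100000 in
/-- Seen from any vertex, the 60 lines through the vertices of the `600`-cell make the squared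
inner products `1`, `(φ/2)²`, `1/4`, `(1/(2φ))²`, `0` with multiplicities `1, 12, 20, 12, 15`;
the entries below are these numbers scaled by `16² = 256`. -/
lemma gram : ∀ v ∈ half, (half.map fun w => dot v w * dot v w).Perm
    (List.replicate 1 ⟨256, 0⟩ ++ List.replicate 12 ⟨96, 32⟩ ++ List.replicate 20 ⟨64, 0⟩ ++
      List.replicate 12 ⟨96, -32⟩ ++ List.replicate 15 ⟨0, 0⟩) := by
  decide +kernel

set_option maxRecDepth 100000 in
lemma full_nodup : full.Nodup := by decide +kernel

/-- The embedding of `ℤ[√5]` into the reals. -/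
def val : ℤ√5 →+* ℝ := Zsqrtd.toReal (d := 5) (by norm_num)

lemma val_mk (a b : ℤ) : val ⟨a, b⟩ = a + b * √5 := by
  simp [val]

lemma val_injective : Function.Injective val := by
  refine Zsqrtd.toReal_injective (by norm_num) fun n hn => ?_
  have h1 : n ≤ 2 := by nlinarith
  have h2 : -2 ≤ n := by nlinarith
  interval_cases n <;> omega

/-- The actual vector represented by an element of `Vec`. -/
def toE (v : Vec) : EuclideanSpace ℝ (Fin 4) :=
  !₂[val v.1 / 4, val v.2.1 / 4, val v.2.2.1 / 4, val v.2.2.2 / 4]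

lemma toE_injective : Function.Injective toE := by
  rintro ⟨a, b, c, d⟩ ⟨a', b', c', d'⟩ h
  have h' := fun i => congrArg (fun v : EuclideanSpace ℝ (Fin 4) => v i) h
  have h0 := h' 0
  have h1 := h' 1
  have h2 := h' 2
  have h3 := h' 3
  simp only [toE] at h0 h1 h2 h3
  simp [div_left_inj', val_injective.eq_iff] at h0 h1 h2 h3
  simp [h0, h1, h2, h3]

lemma inner_toE (v w : Vec) : ⟪toE v, toE w⟫ = val (dot v w) / 16 := by
  simp [toE, dot, PiLp.inner_apply, Fin.sum_univ_four]
  ring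

lemma toE_neg (v : Vec) : toE (-v) = -toE v := by
  ext i
  fin_cases i <;> simp [toE, neg_div]

lemma cell600_neg {x : EuclideanSpace ℝ (Fin 4)} (hx : x ∈ cell600) : -x ∈ cell600 := by
  rcases hx with ⟨i, ε, hε, rfl⟩ | h | ⟨ε, π, hε, hπ, h⟩
  · refine Or.inl ⟨i, -ε, ?_, by simp⟩
    rcases hε with rfl | rfl <;> simp
  · refine Or.inr (Or.inl fun i => ?_)
    rcases h i with h | h <;> simp [h]
  · refine Or.inr (Or.inr ⟨-ε, π, fun i => ?_, hπ, fun i => ?_⟩)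
    · rcases hε i with h | h <;> simp [h]
    · simp [h]

lemma inv_two_φgold : 1 / (2 * φgold) = (√5 - 1) / 4 := by
  have h5 : √5 * √5 = 5 := Real.mul_self_sqrt (by norm_num)
  have hpos : 0 ≤ √5 := Real.sqrt_nonneg 5
  rw [φgold, div_eq_div_iff (by positivity) (by norm_num)]
  linarith

/-- Membership in `cell600` of the vectors of the third kind: `e₁` and `e₂` are signs, and the
permutation `π` places the entries of `(φ/2, 1/2, 1/(2φ), 0)`. -/
lemma mem_cell600_of_perm (x : EuclideanSpace ℝ (Fin 4)) (e₁ e₂ : ℝ) (h₁ : e₁ = 1 ∨ e₁ = -1)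
    (h₂ : e₂ = 1 ∨ e₂ = -1) (π : Equiv.Perm (Fin 4)) (hπ : Equiv.Perm.sign π = 1)
    (hx : ∀ i, x i = (![(1 + √5) / 4, e₁ * (1 / 2), e₂ * ((√5 - 1) / 4), 0] : Fin 4 → ℝ) (π i)) :
    x ∈ cell600 := by
  refine Or.inr (Or.inr ⟨fun i => (![1, e₁, e₂, 1] : Fin 4 → ℝ) (π i), π, fun i => ?_, hπ,
    fun i => ?_⟩)
  · dsimp only
    generalize π i = j
    fin_cases j <;> simp [h₁, h₂]
  · dsimp only
    rw [hx, inv_two_φgold]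
    generalize π i = j
    fin_cases j <;> simp [φgold]
    ring

lemma toE_evenPerms {a b c d : ℤ√5} {v : Vec} (hv : v ∈ evenPerms (a, b, c, d)) :
    ∃ π : Equiv.Perm (Fin 4), Equiv.Perm.sign π = 1 ∧
      ∀ i, toE v i = (![val a / 4, val b / 4, val c / 4, val d / 4] : Fin 4 → ℝ) (π i) := by
  have key (q : Fin 4 → Fin 4) (v : Vec)
      (hq : ∃ π : Equiv.Perm (Fin 4), Equiv.Perm.sign π = 1 ∧ ∀ i, π i = q i)
      (h : ∀ i, toE v i = (![val a / 4, val b / 4, val c / 4, val d / 4] : Fin 4 → ℝ) (q i)) :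
      ∃ π : Equiv.Perm (Fin 4), Equiv.Perm.sign π = 1 ∧
        ∀ i, toE v i = (![val a / 4, val b / 4, val c / 4, val d / 4] : Fin 4 → ℝ) (π i) := by
    obtain ⟨π, hs, hπ⟩ := hq
    exact ⟨π, hs, fun i => by rw [hπ]; exact h i⟩
  simp only [evenPerms, List.mem_cons, List.not_mem_nil, or_false] at hv
  rcases hv with rfl | rfl | rfl | rfl | rfl | rfl | rfl | rfl | rfl | rfl | rfl | rfl
  · exact key ![0, 1, 2, 3] _ (by decide +kernel) (by intro i; fin_cases i <;> rfl)
  · exact key ![0, 2, 3, 1] _ (by decide +kernel) (by intro i; fin_cases i <;> rfl)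
  · exact key ![0, 3, 1, 2] _ (by decide +kernel) (by intro i; fin_cases i <;> rfl)
  · exact key ![1, 0, 3, 2] _ (by decide +kernel) (by intro i; fin_cases i <;> rfl)
  · exact key ![1, 3, 2, 0] _ (by decide +kernel) (by intro i; fin_cases i <;> rfl)
  · exact key ![1, 2, 0, 3] _ (by decide +kernel) (by intro i; fin_cases i <;> rfl)
  · exact key ![2, 3, 0, 1] _ (by decide +kernel) (by intro i; fin_cases i <;> rfl)
  · exact key ![2, 0, 1, 3] _ (by decide +kernel) (by intro i; fin_cases i <;> rfl)
  · exact key ![2, 1, 3, 0] _ (by decide +kernel) (by intro i; fin_cases i <;> rfl)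
  · exact key ![3, 2, 1, 0] _ (by decide +kernel) (by intro i; fin_cases i <;> rfl)
  · exact key ![3, 1, 0, 2] _ (by decide +kernel) (by intro i; fin_cases i <;> rfl)
  · exact key ![3, 0, 2, 1] _ (by decide +kernel) (by intro i; fin_cases i <;> rfl)

lemma toE_half_mem {v : Vec} (hv : v ∈ half) : toE v ∈ cell600 := by
  simp only [half, List.mem_append] at hv
  rcases hv with (((hv | hv) | hv) | hv) | hv
  · simp only [List.mem_cons, List.not_mem_nil, or_false] at hv
    rcases hv with rfl | rfl | rfl | rfl | hv
    · refine Or.inl ⟨0, 1, by simp, ?_⟩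
      ext i; fin_cases i <;> simp [toE, val_mk]
    · refine Or.inl ⟨1, 1, by simp, ?_⟩
      ext i; fin_cases i <;> simp [toE, val_mk]
    · refine Or.inl ⟨2, 1, by simp, ?_⟩
      ext i; fin_cases i <;> simp [toE, val_mk]
    · refine Or.inl ⟨3, 1, by simp, ?_⟩
      ext i; fin_cases i <;> simp [toE, val_mk]
    · refine Or.inr (Or.inl fun i => ?_)
      rcases hv with rfl | rfl | rfl | rfl | rfl | rfl | rfl | rfl <;> fin_cases i <;>
        simp [toE, val_mk] <;> norm_num
  · obtain ⟨π, hs, h⟩ := toE_evenPerms hv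
    refine mem_cell600_of_perm _ 1 1 (by simp) (by simp) π hs fun i => (h i).trans ?_
    generalize π i = j
    fin_cases j <;> simp [val_mk] <;> ring
  · obtain ⟨π, hs, h⟩ := toE_evenPerms hv
    refine mem_cell600_of_perm _ 1 (-1) (by simp) (by simp) π hs fun i => (h i).trans ?_
    generalize π i = j
    fin_cases j <;> simp [val_mk] <;> ring
  · obtain ⟨π, hs, h⟩ := toE_evenPerms hv
    refine mem_cell600_of_perm _ (-1) 1 (by simp) (by simp) π hs fun i => (h i).trans ?_
    generalize π i = j
    fin_cases j <;> simp [val_mk] <;> ring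
  · obtain ⟨π, hs, h⟩ := toE_evenPerms hv
    refine mem_cell600_of_perm _ (-1) (-1) (by simp) (by simp) π hs fun i => (h i).trans ?_
    generalize π i = j
    fin_cases j <;> simp [val_mk] <;> ring

set_option maxRecDepth 100000 in
lemma dot_self_half : ∀ v ∈ half, dot v v = ⟨16, 0⟩ := by decide +kernel

lemma toE_half_norm {v : Vec} (hv : v ∈ half) : ‖toE v‖ = 1 := by
  have h : ‖toE v‖ ^ 2 = 1 := by
    rw [← real_inner_self_eq_norm_sq, inner_toE, dot_self_half v hv, val_mk]
    norm_num
  exact (pow_eq_one_iff_of_nonneg (norm_nonneg _) two_ne_zero).1 h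

/-- The Finset `F` of the theorem is the explicit list `full`: one inclusion is clear, and both
sides have 120 elements. -/
lemma sum_eq_full (F : Finset (Sph 4))
    (hF : ∀ x : Sph 4, x ∈ F ↔ (x : EuclideanSpace ℝ (Fin 4)) ∈ cell600)
    (hcard : F.card = 120) (G : EuclideanSpace ℝ (Fin 4) → ℝ) :
    ∑ x ∈ F, G x = (full.map fun v => G (toE v)).sum := by
  classical
  have himg : full.toFinset.image toE = F.image (fun x : Sph 4 => (x : EuclideanSpace ℝ (Fin 4))) := by
    refine Finset.eq_of_subset_of_card_le (fun y hy => ?_) ?_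
    · obtain ⟨v, hv, rfl⟩ := Finset.mem_image.1 hy
      have : toE v ∈ cell600 ∧ ‖toE v‖ = 1 := by
        rw [List.mem_toFinset, full, List.mem_append, List.mem_map] at hv
        rcases hv with hv | ⟨w, hw, rfl⟩
        · exact ⟨toE_half_mem hv, toE_half_norm hv⟩
        · rw [toE_neg, norm_neg]
          exact ⟨cell600_neg (toE_half_mem hw), toE_half_norm hw⟩
      exact Finset.mem_image.2 ⟨⟨toE v, by simp [this.2]⟩, (hF _).2 this.1, rfl⟩
    · rw [Finset.card_image_of_injective _ toE_injective, List.toFinset_card_of_nodup full_nodup]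
      exact Finset.card_image_le.trans (hcard.le.trans (by decide +kernel))
  rw [← List.sum_toFinset _ full_nodup, ← Finset.sum_image (f := G) toE_injective.injOn, himg,
    Finset.sum_image Subtype.val_injective.injOn]

/-- The energy of the `600`-cell, for a potential `t ↦ g (4 t²)`. -/
lemma energy_unifOn_s2 (F : Finset (Sph 4))
    (hF : ∀ x : Sph 4, x ∈ F ↔ (x : EuclideanSpace ℝ (Fin 4)) ∈ cell600)
    (hcard : F.card = 120) (g : ℝ → ℝ) :
    energy (fun t => g (4 * t ^ 2)) (unifOn F) =
      (g 4 + 12 * g ((3 + √5) / 2) + 20 * g 1 + 12 * g ((3 - √5) / 2) + 15 * g 0) / 60 := by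
  have hint (G : Sph 4 → ℝ) : ∫ x, G x ∂(unifOn F) = (∑ x ∈ F, G x) / 120 := by
    rw [unifOn, integral_smul_measure,
      integral_finsetSum_measure fun _ _ => integrable_dirac (by simp)]
    simp [hcard, integral_dirac]
    ring
  have hdbl (G : Vec → ℝ) (hG : ∀ v, G (-v) = G v) :
      (full.map G).sum = 2 * (half.map G).sum := by
    simp [full, Function.comp_def, hG]
    ring
  have hrow : ∀ v ∈ half, (half.map fun w => g (4 * ⟪toE v, toE w⟫ ^ 2)).sum =
      g 4 + 12 * g ((3 + √5) / 2) + 20 * g 1 + 12 * g ((3 - √5) / 2) + 15 * g 0 := by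
    intro v hv
    have h := ((gram v hv).map fun z => g (val z / 64)).sum_eq
    have e1 : (half.map fun w => g (4 * ⟪toE v, toE w⟫ ^ 2)) =
        (half.map fun w => dot v w * dot v w).map fun z => g (val z / 64) := by
      rw [List.map_map]
      refine List.map_congr_left fun w _ => ?_
      simp only [Function.comp, inner_toE, map_mul]
      congr 1
      ring
    rw [e1, h]
    have e2 : ((96 : ℝ) + 32 * √5) / 64 = (3 + √5) / 2 := by ring
    have e3 : ((96 : ℝ) + -(32 * √5)) / 64 = (3 - √5) / 2 := by ring
    simp [val_mk, e2, e3]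
    norm_num
    ring
  have hsum : ∑ x ∈ F, ∑ y ∈ F, g (4 * ⟪(x : EuclideanSpace ℝ (Fin 4)), (y : EuclideanSpace ℝ (Fin 4))⟫ ^ 2) =
      240 * (g 4 + 12 * g ((3 + √5) / 2) + 20 * g 1 + 12 * g ((3 - √5) / 2) + 15 * g 0) := by
    have inn (x : EuclideanSpace ℝ (Fin 4)) :=
      sum_eq_full F hF hcard fun y => g (4 * ⟪x, y⟫ ^ 2)
    rw [sum_eq_full F hF hcard fun x => ∑ y ∈ F, g (4 * ⟪x, (y : EuclideanSpace ℝ (Fin 4))⟫ ^ 2)]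
    simp only [inn]
    rw [hdbl _ fun v => by simp [toE_neg]]
    have hr : ∀ v ∈ half, (full.map fun w => g (4 * ⟪toE v, toE w⟫ ^ 2)).sum =
        2 * (g 4 + 12 * g ((3 + √5) / 2) + 20 * g 1 + 12 * g ((3 - √5) / 2) + 15 * g 0) := by
      intro v hv
      rw [hdbl _ fun w => by simp [toE_neg], hrow v hv]
    rw [List.map_congr_left hr, List.map_const', List.sum_replicate,
      show half.length = 60 from by decide +kernel]
    simp
    ring
  rw [energy]
  simp only [hint]
  rw [← Finset.sum_div, hsum]
  ring

/-! ### Positive definiteness of the Chebyshev polynomials of the second kind -/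

/-- The Chebyshev polynomial of the second kind `U_{2k}(t)`, as a polynomial in `z = 4 t²`. Up to
normalization, these are the Gegenbauer polynomials of even degree for the sphere `S³`. -/
def cheb : ℕ → ℝ → ℝ
  | 0, _ => 1
  | 1, z => z - 1
  | k + 2, z => (z - 2) * cheb (k + 1) z - cheb k z

/-- The `(j, k)` matrix entry of the `n`-th symmetric power of the matrix `!![a, b; c, d]`, that is,
the coefficient of `u ^ k * v ^ (n - k)` in `(a u + b v) ^ j * (c u + d v) ^ (n - j)`. -/
def symPow (n : ℕ) (a b c d : ℂ) (j k : ℕ) : ℂ :=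
  ∑ i ∈ Finset.range (j + 1), ∑ l ∈ Finset.range (n - j + 1),
    if i + l = k then
      (a ^ i * b ^ (j - i) * j.choose i) * (c ^ l * d ^ (n - j - l) * (n - j).choose l)
    else 0

lemma sum_symPow {n : ℕ} (a b c d : ℂ) {j : ℕ} (hj : j ≤ n) (u v : ℂ) :
    ∑ k ∈ Finset.range (n + 1), symPow n a b c d j k * (u ^ k * v ^ (n - k)) =
      (a * u + b * v) ^ j * (c * u + d * v) ^ (n - j) := by
  simp only [symPow, Finset.sum_mul]
  rw [Finset.sum_comm, add_pow, add_pow, Finset.sum_mul_sum]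
  refine Finset.sum_congr rfl fun i hi => ?_
  rw [Finset.sum_comm]
  refine Finset.sum_congr rfl fun l hl => ?_
  rw [Finset.mem_range] at hi hl
  simp only [ite_mul, zero_mul]
  rw [Finset.sum_ite_eq, if_pos (by rw [Finset.mem_range]; omega)]
  rw [show n - (i + l) = (j - i) + (n - j - l) by omega]
  simp only [mul_pow, pow_add]
  ring

/-- Two homogeneous polynomials of degree `n` in two variables which agree as functions have the
same coefficients. -/
lemma coeff_eq_of_forall {n : ℕ} {p q : ℕ → ℂ}
    (h : ∀ u : ℂ, ∑ k ∈ Finset.range (n + 1), p k * u ^ k =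
      ∑ k ∈ Finset.range (n + 1), q k * u ^ k) {k : ℕ} (hk : k ≤ n) : p k = q k := by
  have key : (∑ k ∈ Finset.range (n + 1), Polynomial.C (p k) * Polynomial.X ^ k) =
      ∑ k ∈ Finset.range (n + 1), Polynomial.C (q k) * Polynomial.X ^ k := by
    refine Polynomial.funext fun u => ?_
    simpa [Polynomial.eval_finsetSum] using h u
  have := congrArg (fun P => Polynomial.coeff P k) key
  simpa [Polynomial.finsetSum_coeff, Polynomial.coeff_C_mul, Polynomial.coeff_X_pow,
    Nat.lt_succ_iff.2 hk] using this

/-- The symmetric power is multiplicative. -/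
lemma symPow_mul {n : ℕ} (a b c d a' b' c' d' : ℂ) {j k : ℕ} (hj : j ≤ n) (hk : k ≤ n) :
    symPow n (a * a' + b * c') (a * b' + b * d') (c * a' + d * c') (c * b' + d * d') j k =
      ∑ l ∈ Finset.range (n + 1), symPow n a b c d j l * symPow n a' b' c' d' l k := by
  refine coeff_eq_of_forall (n := n)
    (p := symPow n (a * a' + b * c') (a * b' + b * d') (c * a' + d * c') (c * b' + d * d') j)
    (q := fun k => ∑ l ∈ Finset.range (n + 1), symPow n a b c d j l * symPow n a' b' c' d' l k)
    (fun u => ?_) hk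
  have h1 := sum_symPow (a * a' + b * c') (a * b' + b * d') (c * a' + d * c')
    (c * b' + d * d') hj u 1
  have h2 := sum_symPow a b c d hj (a' * u + b') (c' * u + d')
  simp only [one_pow, mul_one] at h1
  rw [h1]
  simp only [Finset.sum_mul]
  rw [Finset.sum_comm]
  calc _ = (a * (a' * u + b') + b * (c' * u + d')) ^ j *
        (c * (a' * u + b') + d * (c' * u + d')) ^ (n - j) := by
          congr 2 <;> ring
    _ = _ := by
          rw [← h2]
          refine Finset.sum_congr rfl fun l hl => ?_
          have h3 := sum_symPow a' b' c' d' (n := n) (j := l)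
            (Nat.lt_succ_iff.1 (Finset.mem_range.1 hl)) u 1
          simp only [one_pow, mul_one] at h3
          rw [← h3, Finset.mul_sum]
          exact Finset.sum_congr rfl fun k _ => by ring

/-- Transposing the matrix transposes its symmetric power, up to the binomial weights. -/
lemma symPow_transpose {n : ℕ} (a b c d : ℂ) {j k : ℕ} (hj : j ≤ n) (hk : k ≤ n) :
    (n.choose j : ℂ) * symPow n a b c d j k = n.choose k * symPow n a c b d k j := by
  -- both sides are the coefficient of `x ^ j * u ^ k` in `(a x u + b x + c u + d) ^ n`
  have h1 (x u : ℂ) : ∑ j ∈ Finset.range (n + 1), ∑ k ∈ Finset.range (n + 1),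
      (n.choose j * symPow n a b c d j k) * u ^ k * x ^ j = (a * x * u + b * x + c * u + d) ^ n := by
    rw [show a * x * u + b * x + c * u + d = (a * u + b) * x + (c * u + d) by ring, add_pow]
    refine Finset.sum_congr rfl fun j hj => ?_
    have h3 := sum_symPow a b c d (n := n) (j := j)
      (Nat.lt_succ_iff.1 (Finset.mem_range.1 hj)) u 1
    simp only [one_pow, mul_one] at h3
    trans (n.choose j * x ^ j) * ∑ k ∈ Finset.range (n + 1), symPow n a b c d j k * u ^ k
    · rw [Finset.mul_sum]
      exact Finset.sum_congr rfl fun k _ => by ring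
    · rw [h3, mul_pow]
      ring
  have h2 (x u : ℂ) : ∑ j ∈ Finset.range (n + 1), ∑ k ∈ Finset.range (n + 1),
      (n.choose k * symPow n a c b d k j) * u ^ k * x ^ j = (a * x * u + b * x + c * u + d) ^ n := by
    rw [show a * x * u + b * x + c * u + d = (a * x + c) * u + (b * x + d) by ring, add_pow,
      Finset.sum_comm]
    refine Finset.sum_congr rfl fun k hk => ?_
    have h3 := sum_symPow a c b d (n := n) (j := k)
      (Nat.lt_succ_iff.1 (Finset.mem_range.1 hk)) x 1
    simp only [one_pow, mul_one] at h3
    trans (n.choose k * u ^ k) * ∑ j ∈ Finset.range (n + 1), symPow n a c b d k j * x ^ j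
    · rw [Finset.mul_sum]
      exact Finset.sum_congr rfl fun k _ => by ring
    · rw [h3, mul_pow]
      ring
  refine coeff_eq_of_forall (n := n) (p := fun k => (n.choose j : ℂ) * symPow n a b c d j k)
    (q := fun k => n.choose k * symPow n a c b d k j) (fun u => ?_) hk
  refine coeff_eq_of_forall (n := n)
    (p := fun j => ∑ k ∈ Finset.range (n + 1), (n.choose j : ℂ) * symPow n a b c d j k * u ^ k)
    (q := fun j => ∑ k ∈ Finset.range (n + 1), n.choose k * symPow n a c b d k j * u ^ k)
    (fun x => ?_) hj
  simp only [Finset.sum_mul]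
  rw [h1, h2]

/-- The trace of the `n`-th symmetric power of a matrix. -/
def symTrace (n : ℕ) (a b c d : ℂ) : ℂ := ∑ j ∈ Finset.range (n + 1), symPow n a b c d j j

/-- The trace of the symmetric power is invariant under conjugation by `!![1, 0; x, 1]`. -/
lemma symTrace_conj (n : ℕ) (a b c d x : ℂ) :
    symTrace n (a - b * x) b (c + x * a - x * (d + x * b)) (d + x * b) = symTrace n a b c d := by
  have h1 (j : ℕ) (hj : j ∈ Finset.range (n + 1)) :=
    symPow_mul (n := n) a b (c + x * a) (d + x * b) 1 0 (-x) 1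
      (Nat.lt_succ_iff.1 (Finset.mem_range.1 hj)) (Nat.lt_succ_iff.1 (Finset.mem_range.1 hj))
  have h2 (j : ℕ) (hj : j ∈ Finset.range (n + 1)) :=
    symPow_mul (n := n) 1 0 (-x) 1 a b (c + x * a) (d + x * b)
      (Nat.lt_succ_iff.1 (Finset.mem_range.1 hj)) (Nat.lt_succ_iff.1 (Finset.mem_range.1 hj))
  have e1 : symTrace n (a - b * x) b (c + x * a - x * (d + x * b)) (d + x * b) =
      ∑ j ∈ Finset.range (n + 1), ∑ l ∈ Finset.range (n + 1),
        symPow n a b (c + x * a) (d + x * b) j l * symPow n 1 0 (-x) 1 l j := by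
    refine Finset.sum_congr rfl fun j hj => ?_
    rw [← h1 j hj]
    congr 1 <;> ring
  have e2 : symTrace n a b c d =
      ∑ j ∈ Finset.range (n + 1), ∑ l ∈ Finset.range (n + 1),
        symPow n 1 0 (-x) 1 j l * symPow n a b (c + x * a) (d + x * b) l j := by
    refine Finset.sum_congr rfl fun j hj => ?_
    rw [← h2 j hj]
    congr 1 <;> ring
  rw [e1, e2, Finset.sum_comm]
  exact Finset.sum_congr rfl fun j _ => Finset.sum_congr rfl fun l _ => by ring

lemma symTrace_upper (n : ℕ) (a b d : ℂ) :
    symTrace n a b 0 d = ∑ j ∈ Finset.range (n + 1), a ^ j * d ^ (n - j) := by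
  refine Finset.sum_congr rfl fun j _ => ?_
  rw [symPow, Finset.sum_eq_single_of_mem j (by simp), Finset.sum_eq_single_of_mem 0 (by simp)]
  · simp
  · intro l _ hl
    simp [hl]
  · intro i hi hij
    refine Finset.sum_eq_zero fun l _ => ?_
    split_ifs with h
    · simp [show l ≠ 0 by omega]
    · rfl

lemma symTrace_lower (n : ℕ) (a c d : ℂ) :
    symTrace n a 0 c d = ∑ j ∈ Finset.range (n + 1), a ^ j * d ^ (n - j) := by
  refine Finset.sum_congr rfl fun j _ => ?_
  rw [symPow, Finset.sum_eq_single_of_mem j (by simp), Finset.sum_eq_single_of_mem 0 (by simp)]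
  · simp
  · intro l _ hl
    simp [hl]
  · intro i hi hij
    rw [Finset.mem_range] at hi
    refine Finset.sum_eq_zero fun l _ => ?_
    simp [show j - i ≠ 0 by omega]

/-- The characters of `SL₂` satisfy the Chebyshev recurrence (with step two). -/
lemma geom_cheb {a d : ℂ} (had : a * d = 1) {t : ℝ} (ht : a + d = 2 * t) (k : ℕ) :
    ∑ j ∈ Finset.range (2 * k + 1), a ^ j * d ^ (2 * k - j) = cheb k (4 * t ^ 2) := by
  have hz : ((4 * t ^ 2 : ℝ) : ℂ) = (a + d) ^ 2 := by
    rw [ht]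
    push_cast
    ring
  have hone (n : ℕ) : ∑ j ∈ Finset.range (n + 1 + 1), a ^ j * d ^ (n + 1 - j) =
      a * ∑ j ∈ Finset.range (n + 1), a ^ j * d ^ (n - j) + d ^ (n + 1) := by
    rw [Finset.sum_range_succ', Finset.mul_sum]
    congr 1
    · refine Finset.sum_congr rfl fun j _ => ?_
      rw [Nat.add_sub_add_right]
      ring
    · simp
  have hrec (n : ℕ) : ∑ j ∈ Finset.range (n + 4 + 1), a ^ j * d ^ (n + 4 - j) =
      ((a + d) ^ 2 - 2) * ∑ j ∈ Finset.range (n + 2 + 1), a ^ j * d ^ (n + 2 - j) -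
        ∑ j ∈ Finset.range (n + 1), a ^ j * d ^ (n - j) := by
    have h1 := hone n
    have h2 := hone (n + 1)
    have h3 := hone (n + 2)
    have h4 := hone (n + 3)
    simp only [add_assoc, Nat.reduceAdd] at h1 h2 h3 h4 ⊢
    rw [h4, h3, h2, h1]
    generalize ∑ j ∈ Finset.range (n + 1), a ^ j * d ^ (n - j) = s
    simp only [pow_add]
    have hd : d = a⁻¹ := eq_inv_of_mul_eq_one_right had
    have ha : a ≠ 0 := left_ne_zero_of_mul_eq_one had
    subst hd
    field_simp
    ring
  induction k using Nat.twoStepInduction with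
  | zero => simp [cheb]
  | one =>
    rw [show 2 * 1 = 0 + 1 + 1 from rfl, hone, hone, cheb]
    push_cast at hz ⊢
    rw [hz]
    simp
    linear_combination (-1) * had
  | more k ih1 ih2 =>
    rw [show 2 * (k + 1) = 2 * k + 2 by ring] at ih2
    rw [show 2 * (k + 2) = 2 * k + 4 by ring, hrec, cheb]
    push_cast at hz ⊢
    rw [ih1, ih2, hz]

/-- Weyl's character formula for `SL₂(ℂ)`. -/
lemma symTrace_eq_cheb {a b c d : ℂ} (hdet : a * d - b * c = 1) {t : ℝ} (ht : a + d = 2 * t)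
    (k : ℕ) : symTrace (2 * k) a b c d = cheb k (4 * t ^ 2) := by
  rcases eq_or_ne b 0 with rfl | hb
  · rw [symTrace_lower]
    exact geom_cheb (by linear_combination hdet) ht k
  · -- an eigenvalue `l` of the matrix allows one to conjugate it to an upper triangular one
    obtain ⟨l, hl⟩ : ∃ l : ℂ, (Polynomial.X ^ 2 - Polynomial.C (a + d) * Polynomial.X + 1).IsRoot l := by
      refine IsAlgClosed.exists_root _ ?_
      rw [show (Polynomial.X ^ 2 - Polynomial.C (a + d) * Polynomial.X + 1 : Polynomial ℂ) =
        Polynomial.C 1 * Polynomial.X ^ 2 + Polynomial.C (-(a + d)) * Polynomial.X + Polynomial.C 1 by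
          simp; ring, Polynomial.degree_quadratic one_ne_zero]
      decide
    simp [Polynomial.IsRoot] at hl
    rw [← symTrace_conj _ a b c d ((a - l) / b)]
    have e1 : a - b * ((a - l) / b) = l := by field_simp; ring
    have e2 : d + (a - l) / b * b = a + d - l := by field_simp; ring
    have e3 : c + (a - l) / b * a - (a - l) / b * (a + d - l) = 0 := by
      field_simp
      linear_combination -hl - hdet
    rw [e2, e1, e3, symTrace_upper]
    exact geom_cheb (by linear_combination -hl) (by rw [← ht]; ring) k

/-- The matrix coefficients of the irreducible representation of dimension `n + 1` of
`SU(2) ≅ S³`. -/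
def coeffFn (n j k : ℕ) (x : EuclideanSpace ℝ (Fin 4)) : ℂ :=
  symPow n (x 0 + x 1 * Complex.I) (x 2 + x 3 * Complex.I)
    (-(x 2 - x 3 * Complex.I)) (x 0 - x 1 * Complex.I) j k

lemma continuous_coeffFn (n j k : ℕ) : Continuous (coeffFn n j k) := by
  unfold coeffFn symPow
  refine continuous_finsetSum _ fun i _ => continuous_finsetSum _ fun l _ => ?_
  split_ifs <;> fun_prop

lemma conj_symPow (n : ℕ) (a b c d : ℂ) (j k : ℕ) :
    starRingEnd ℂ (symPow n a b c d j k) = symPow n (starRingEnd ℂ a) (starRingEnd ℂ b)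
      (starRingEnd ℂ c) (starRingEnd ℂ d) j k := by
  simp only [symPow, map_sum]
  refine Finset.sum_congr rfl fun i _ => Finset.sum_congr rfl fun l _ => ?_
  split_ifs <;> simp

/-- The addition formula: `U_{2k}(⟨x, y⟩)` is the character of `SU(2)` at `x y⁻¹`, hence a
combination with nonnegative coefficients of products of matrix coefficients. -/
lemma cheb_inner (k : ℕ) (x y : Sph 4) :
    (cheb k (4 * ⟪(x : EuclideanSpace ℝ (Fin 4)), (y : EuclideanSpace ℝ (Fin 4))⟫ ^ 2) : ℂ) =
      ∑ j ∈ Finset.range (2 * k + 1), ∑ l ∈ Finset.range (2 * k + 1),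
        (((2 * k).choose j / (2 * k).choose l : ℝ) : ℂ) *
          (coeffFn (2 * k) j l x * starRingEnd ℂ (coeffFn (2 * k) j l y)) := by
  obtain ⟨x, hx⟩ := x
  obtain ⟨y, hy⟩ := y
  have hnorm (x : EuclideanSpace ℝ (Fin 4)) (hx : x ∈ Metric.sphere (0 : EuclideanSpace ℝ (Fin 4)) 1) :
      (x 0 : ℂ) ^ 2 + x 1 ^ 2 + x 2 ^ 2 + x 3 ^ 2 = 1 := by
    have : ‖x‖ ^ 2 = 1 := by simp [mem_sphere_zero_iff_norm.1 hx]
    rw [EuclideanSpace.norm_sq_eq, Fin.sum_univ_four] at this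
    simp only [Real.norm_eq_abs, sq_abs] at this
    exact_mod_cast this
  have hX := hnorm x hx
  have hY := hnorm y hy
  have hI := Complex.I_sq
  set n := 2 * k with hn
  have htr : ∀ j ∈ Finset.range (n + 1), ∀ l ∈ Finset.range (n + 1),
      symPow n (y 0 - y 1 * Complex.I) (-(y 2 + y 3 * Complex.I))
        (y 2 - y 3 * Complex.I) (y 0 + y 1 * Complex.I) l j =
      ((n.choose j / n.choose l : ℝ) : ℂ) * starRingEnd ℂ (coeffFn n j l y) := by
    intro j hj l hl
    have hj' := Nat.lt_succ_iff.1 (Finset.mem_range.1 hj)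
    have hl' := Nat.lt_succ_iff.1 (Finset.mem_range.1 hl)
    have h := symPow_transpose (n := n) (y 0 - y 1 * Complex.I) (-(y 2 + y 3 * Complex.I))
      (y 2 - y 3 * Complex.I) (y 0 + y 1 * Complex.I) hl' hj'
    have hne : (n.choose l : ℂ) ≠ 0 := by exact_mod_cast (Nat.choose_pos hl').ne'
    rw [coeffFn, conj_symPow]
    simp only [map_add, map_sub, map_neg, map_mul, Complex.conj_ofReal, Complex.conj_I]
    push_cast
    rw [div_mul_eq_mul_div, eq_div_iff hne, mul_comm, h]
    congr 2 <;> ring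
  have hdet : ∀ a b c d a' b' c' d' : ℂ, a * d - b * c = 1 → a' * d' - b' * c' = 1 →
      (a * a' + b * c') * (c * b' + d * d') - (a * b' + b * d') * (c * a' + d * c') = 1 := by
    intro a b c d a' b' c' d' h1 h2
    linear_combination (a' * d' - b' * c') * h1 + h2
  have key := symTrace_eq_cheb (t := ⟪x, y⟫) (k := k)
    (hdet (x 0 + x 1 * Complex.I) (x 2 + x 3 * Complex.I)
      (-(x 2 - x 3 * Complex.I)) (x 0 - x 1 * Complex.I) (y 0 - y 1 * Complex.I)
      (-(y 2 + y 3 * Complex.I)) (y 2 - y 3 * Complex.I) (y 0 + y 1 * Complex.I)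
      (by linear_combination hX - (x 1 ^ 2 + x 3 ^ 2) * hI)
      (by linear_combination hY - (y 1 ^ 2 + y 3 ^ 2) * hI))
    (by
      simp only [PiLp.inner_apply, Fin.sum_univ_four, RCLike.inner_apply, conj_trivial]
      push_cast
      linear_combination (-2 * x 1 * y 1 - 2 * x 3 * y 3) * hI)
  rw [← key, symTrace]
  refine Finset.sum_congr rfl fun j hj => ?_
  rw [symPow_mul _ _ _ _ _ _ _ _ (Nat.lt_succ_iff.1 (Finset.mem_range.1 hj))
    (Nat.lt_succ_iff.1 (Finset.mem_range.1 hj))]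
  refine Finset.sum_congr rfl fun l hl => ?_
  rw [htr j hj l hl, mul_left_comm]
  rfl

lemma continuous_cheb (k : ℕ) : Continuous (cheb k) := by
  induction k using Nat.twoStepInduction with
  | zero => exact continuous_const
  | one => exact continuous_id.sub continuous_const
  | more k ih1 ih2 =>
    exact ((continuous_id.sub continuous_const).mul ih2).sub ih1

lemma integrable_of_continuous {X E : Type*} [TopologicalSpace X] [CompactSpace X]
    [MeasurableSpace X] [BorelSpace X] [NormedAddCommGroup E] [SecondCountableTopology E]
    {ν : Measure X} [IsFiniteMeasure ν] {f : X → E} (hf : Continuous f) : Integrable f ν :=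
  hf.integrable_of_hasCompactSupport (HasCompactSupport.of_compactSpace f)

lemma energy_cheb_nonneg (k : ℕ) (μ : Measure (Sph 4)) [IsProbabilityMeasure μ] :
    0 ≤ energy (fun t => cheb k (4 * t ^ 2)) μ := by
  have hc (j l : ℕ) : Integrable (fun x : Sph 4 => coeffFn (2 * k) j l x) μ :=
    integrable_of_continuous ((continuous_coeffFn _ _ _).comp continuous_subtype_val)
  have hc' (j l : ℕ) : Integrable (fun x : Sph 4 => starRingEnd ℂ (coeffFn (2 * k) j l x)) μ :=
    integrable_of_continuous
      (Complex.continuous_conj.comp ((continuous_coeffFn _ _ _).comp continuous_subtype_val))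
  have h : (energy (fun t => cheb k (4 * t ^ 2)) μ : ℂ) =
      ∑ j ∈ Finset.range (2 * k + 1), ∑ l ∈ Finset.range (2 * k + 1),
        (((2 * k).choose j / (2 * k).choose l : ℝ) : ℂ) *
          ((∫ x : Sph 4, coeffFn (2 * k) j l x ∂μ) *
            starRingEnd ℂ (∫ x : Sph 4, coeffFn (2 * k) j l x ∂μ)) := by
    rw [energy, ← integral_complex_ofReal]
    simp only [← integral_complex_ofReal, cheb_inner]
    have inner_int (x : Sph 4) : ∫ y : Sph 4, (∑ j ∈ Finset.range (2 * k + 1),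
        ∑ l ∈ Finset.range (2 * k + 1), (((2 * k).choose j / (2 * k).choose l : ℝ) : ℂ) *
          (coeffFn (2 * k) j l x * starRingEnd ℂ (coeffFn (2 * k) j l y))) ∂μ =
        ∑ j ∈ Finset.range (2 * k + 1),
        ∑ l ∈ Finset.range (2 * k + 1), (((2 * k).choose j / (2 * k).choose l : ℝ) : ℂ) *
          (coeffFn (2 * k) j l x * starRingEnd ℂ (∫ y : Sph 4, coeffFn (2 * k) j l y ∂μ)) := by
      rw [integral_finsetSum _ fun j _ => integrable_finsetSum _ fun l _ =>
        ((hc' j l).const_mul _).const_mul _]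
      refine Finset.sum_congr rfl fun j _ => ?_
      rw [integral_finsetSum _ fun l _ => ((hc' j l).const_mul _).const_mul _]
      refine Finset.sum_congr rfl fun l _ => ?_
      rw [integral_const_mul, integral_const_mul, integral_conj]
    simp only [inner_int]
    rw [integral_finsetSum _ fun j _ => integrable_finsetSum _ fun l _ =>
        ((hc j l).mul_const _).const_mul _]
    refine Finset.sum_congr rfl fun j _ => ?_
    rw [integral_finsetSum _ fun l _ => ((hc j l).mul_const _).const_mul _]
    refine Finset.sum_congr rfl fun l _ => ?_
    rw [integral_const_mul, integral_mul_const]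
  simp only [Complex.mul_conj] at h
  have h' : energy (fun t => cheb k (4 * t ^ 2)) μ =
      ∑ j ∈ Finset.range (2 * k + 1), ∑ l ∈ Finset.range (2 * k + 1),
        ((2 * k).choose j / (2 * k).choose l : ℝ) *
          Complex.normSq (∫ x : Sph 4, coeffFn (2 * k) j l x ∂μ) := by
    exact_mod_cast h
  rw [h']
  exact Finset.sum_nonneg fun j _ => Finset.sum_nonneg fun l _ =>
    mul_nonneg (by positivity) (Complex.normSq_nonneg _)

/-! ### The linear programming bound -/

/-- The zeros of this polynomial are the values `z = 4 t²` coming from the inner products `t` in the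
`600`-cell. -/
lemma node_nonpos {z : ℝ} (h0 : 0 ≤ z) (h4 : z ≤ 4) :
    z * (z - 4) * (z - 1) ^ 2 * (z ^ 2 - 3 * z + 1) ^ 2 ≤ 0 := by
  have : 0 ≤ z * (4 - z) * ((z - 1) ^ 2 * (z ^ 2 - 3 * z + 1) ^ 2) :=
    mul_nonneg (mul_nonneg h0 (by linarith)) (by positivity)
  linarith

/-- The `600`-cell averages `cheb k` to zero for `1 ≤ k ≤ 9`, `k ≠ 6`: it is a spherical
`11`-design, and harmonics of degrees `14`, `16`, `18` average to zero as well. -/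
lemma quadrature {k : ℕ} (hk : k < 10) (h0 : k ≠ 0) (h6 : k ≠ 6) :
    cheb k 4 + 12 * cheb k ((3 + √5) / 2) + 20 * cheb k 1 + 12 * cheb k ((3 - √5) / 2) +
      15 * cheb k 0 = 0 := by
  have h5 : √5 ^ 2 = 5 := Real.sq_sqrt (by norm_num)
  have ha : ((3 + √5) / 2) ^ 2 = 3 * ((3 + √5) / 2) - 1 := by linear_combination h5 / 4
  have hb : ((3 - √5) / 2) ^ 2 = 3 * ((3 - √5) / 2) - 1 := by linear_combination h5 / 4
  have hs : (3 + √5) / 2 + (3 - √5) / 2 = 3 := by ring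
  generalize (3 + √5) / 2 = a at *
  generalize (3 - √5) / 2 = b at *
  -- the values at the roots of `z² - 3 z + 1` are periodic up to sign
  have hval (z : ℝ) (hz : z ^ 2 = 3 * z - 1) : cheb 2 z = 0 ∧ cheb 3 z = 1 - z ∧ cheb 4 z = -1 ∧
      cheb 5 z = 1 ∧ cheb 6 z = z - 1 ∧ cheb 7 z = 0 ∧ cheb 8 z = 1 - z ∧ cheb 9 z = -1 := by
    have h1 : cheb 1 z = z - 1 := rfl
    have h2 : cheb 2 z = 0 := by
      rw [cheb, cheb, cheb]
      linear_combination hz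
    have h3 : cheb 3 z = 1 - z := by rw [cheb, h2, h1]; ring
    have h4 : cheb 4 z = -1 := by rw [cheb, h3, h2]; linear_combination -hz
    have h5 : cheb 5 z = 1 := by rw [cheb, h4, h3]; ring
    have h6 : cheb 6 z = z - 1 := by rw [cheb, h5, h4]; ring
    have h7 : cheb 7 z = 0 := by rw [cheb, h6, h5]; linear_combination hz
    have h8 : cheb 8 z = 1 - z := by rw [cheb, h7, h6]; ring
    have h9 : cheb 9 z = -1 := by rw [cheb, h8, h7]; linear_combination -hz
    exact ⟨h2, h3, h4, h5, h6, h7, h8, h9⟩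
  obtain ⟨a2, a3, a4, a5, a6, a7, a8, a9⟩ := hval a ha
  obtain ⟨b2, b3, b4, b5, b6, b7, b8, b9⟩ := hval b hb
  interval_cases k
  · exact absurd rfl h0
  · simp only [cheb]; linarith
  · rw [a2, b2]; norm_num [cheb]
  · rw [a3, b3]; norm_num [cheb]; linarith
  · rw [a4, b4]; norm_num [cheb]
  · rw [a5, b5]; norm_num [cheb]
  · exact absurd rfl h6
  · rw [a7, b7]; norm_num [cheb]
  · rw [a8, b8]; norm_num [cheb]; linarith
  · rw [a9, b9]; norm_num [cheb]

lemma integrable_inner {f : ℝ → ℝ} (hf : Continuous f) (μ : Measure (Sph 4))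
    [IsProbabilityMeasure μ] (x : Sph 4) : Integrable (fun y : Sph 4 =>
      f ⟪(x : EuclideanSpace ℝ (Fin 4)), (y : EuclideanSpace ℝ (Fin 4))⟫) μ :=
  integrable_of_continuous (by fun_prop)

lemma integrable_integral_inner {f : ℝ → ℝ} (hf : Continuous f) (μ : Measure (Sph 4))
    [IsProbabilityMeasure μ] : Integrable (fun x : Sph 4 => ∫ y : Sph 4,
      f ⟪(x : EuclideanSpace ℝ (Fin 4)), (y : EuclideanSpace ℝ (Fin 4))⟫ ∂μ) μ := by
  have : Integrable (fun q : Sph 4 × Sph 4 =>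
      f ⟪(q.1 : EuclideanSpace ℝ (Fin 4)), (q.2 : EuclideanSpace ℝ (Fin 4))⟫) (μ.prod μ) :=
    integrable_of_continuous (by fun_prop)
  exact this.integral_prod_left

/-- Delsarte's linear programming bound. The coefficient of `cheb 6 = U_{12}` has to vanish, since
this is the one harmonic degree below `20` for which the average over the `600`-cell is nonzero. -/
lemma lp_bound (F : Finset (Sph 4))
    (hF : ∀ x : Sph 4, x ∈ F ↔ (x : EuclideanSpace ℝ (Fin 4)) ∈ cell600)
    (hcard : F.card = 120) (μ : Measure (Sph 4)) [IsProbabilityMeasure μ]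
    {g : ℝ → ℝ} (hg : Continuous g) (c : ℕ → ℝ) (hc : ∀ k, 0 ≤ c k) (hc6 : c 6 = 0)
    (hle : ∀ z, 0 ≤ z → z ≤ 4 → ∑ k ∈ Finset.range 10, c k * cheb k z ≤ g z)
    (heq : ∀ z, 0 ≤ z → z * (z - 4) * (z - 1) ^ 2 * (z ^ 2 - 3 * z + 1) ^ 2 = 0 →
      ∑ k ∈ Finset.range 10, c k * cheb k z = g z) :
    energy (fun t => g (4 * t ^ 2)) (unifOn F) ≤ energy (fun t => g (4 * t ^ 2)) μ := by
  have hcell : energy (fun t => g (4 * t ^ 2)) (unifOn F) = c 0 := by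
    have h5 : √5 ^ 2 = 5 := Real.sq_sqrt (by norm_num)
    have h5' : √5 ≤ 3 := Real.sqrt_le_iff.2 (by norm_num)
    have hp : ((3 + √5) / 2) ^ 2 - 3 * ((3 + √5) / 2) + 1 = 0 := by linear_combination h5 / 4
    have hm : ((3 - √5) / 2) ^ 2 - 3 * ((3 - √5) / 2) + 1 = 0 := by linear_combination h5 / 4
    rw [energy_unifOn_s2 F hF hcard, ← heq 4 (by norm_num) (by ring), ← heq 1 (by norm_num) (by ring),
      ← heq 0 le_rfl (by ring), ← heq ((3 + √5) / 2) (by positivity) (by rw [hp]; ring),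
      ← heq ((3 - √5) / 2) (by linarith) (by rw [hm]; ring)]
    have hall : ∑ k ∈ Finset.range 10, c k * (cheb k 4 + 12 * cheb k ((3 + √5) / 2) +
        20 * cheb k 1 + 12 * cheb k ((3 - √5) / 2) + 15 * cheb k 0) = 60 * c 0 := by
      rw [Finset.sum_eq_single_of_mem 0 (by simp)]
      · simp only [cheb]
        ring
      · intro k hk h0
        rcases eq_or_ne k 6 with rfl | h6
        · rw [hc6, zero_mul]
        · rw [quadrature (Finset.mem_range.1 hk) h0 h6, mul_zero]
    simp only [Finset.mul_sum, ← Finset.sum_add_distrib]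
    rw [div_eq_iff (by norm_num), mul_comm, ← hall]
    exact Finset.sum_congr rfl fun k _ => by ring
  have hcont (k : ℕ) : Continuous fun t : ℝ => cheb k (4 * t ^ 2) :=
    (continuous_cheb k).comp (by fun_prop)
  have hsum : energy (fun t => ∑ k ∈ Finset.range 10, c k * cheb k (4 * t ^ 2)) μ =
      ∑ k ∈ Finset.range 10, c k * energy (fun t => cheb k (4 * t ^ 2)) μ := by
    simp only [energy]
    have h1 (x : Sph 4) := integral_finsetSum (μ := μ) (Finset.range 10)
      fun k _ => (integrable_inner (hcont k) μ x).const_mul (c k)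
    simp only [h1, integral_const_mul]
    rw [integral_finsetSum _ fun k _ => (integrable_integral_inner (hcont k) μ).const_mul (c k)]
    simp only [integral_const_mul]
  have hlow : c 0 ≤ ∑ k ∈ Finset.range 10, c k * energy (fun t => cheb k (4 * t ^ 2)) μ := by
    have h0 : c 0 * energy (fun t => cheb 0 (4 * t ^ 2)) μ = c 0 := by simp [energy, cheb]
    rw [← h0]
    exact Finset.single_le_sum (f := fun k => c k * energy (fun t => cheb k (4 * t ^ 2)) μ)
      (fun k _ => mul_nonneg (hc k) (energy_cheb_nonneg k μ)) (by simp)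
  have hgc : Continuous fun t : ℝ => g (4 * t ^ 2) := hg.comp (by fun_prop)
  have hhc : Continuous fun t : ℝ => ∑ k ∈ Finset.range 10, c k * cheb k (4 * t ^ 2) :=
    continuous_finsetSum _ fun k _ => (hcont k).const_mul _
  rw [hcell]
  refine hlow.trans (hsum.symm.le.trans ?_)
  refine integral_mono (integrable_integral_inner hhc μ) (integrable_integral_inner hgc μ) fun x =>
    integral_mono (integrable_inner hhc μ x) (integrable_inner hgc μ x) fun y => ?_
  have hxy := abs_le.1 (abs_real_inner_le_norm (x : EuclideanSpace ℝ (Fin 4))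
    (y : EuclideanSpace ℝ (Fin 4)))
  simp only [norm_eq_of_mem_sphere, mul_one] at hxy
  exact hle _ (by positivity) (by nlinarith)

/-! ### The certificate for `z⁵ / (z + r)` -/

/-- The numerators, over the common denominator `28 (r + 1) den r`, of the coefficients of a
polynomial of degree nine in the basis `cheb k`. It interpolates `z⁵ / (z + r)` to first order at
`0` and `4` and to second order at the other three nodes, and it has no component along `cheb 6`;
the one remaining degree of freedom is fixed so that it lies below `z⁵ / (z + r)` on `[0, 4]` and
has nonnegative coefficients, for all `r > 0`. -/
def num (r : ℝ) : ℕ → ℝ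
  | 0 => 1568 + 12376 * r + 36372 * r ^ 2 + 49896 * r ^ 3 + 33544 * r ^ 4 + 10388 * r ^ 5 +
      1176 * r ^ 6
  | 1 => 3136 + 24864 * r + 73556 * r ^ 2 + 101892 * r ^ 3 + 69412 * r ^ 4 + 21861 * r ^ 5 +
      2520 * r ^ 6
  | 2 => 2240 + 17920 * r + 53732 * r ^ 2 + 75964 * r ^ 3 + 53276 * r ^ 4 + 17437 * r ^ 5 +
      2100 * r ^ 6
  | 3 => 784 + 6356 * r + 19460 * r ^ 2 + 28448 * r ^ 3 + 21000 * r ^ 4 + 7406 * r ^ 5 + 980 * r ^ 6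
  | 4 => 112 + 924 * r + 2912 * r ^ 2 + 4480 * r ^ 3 + 3620 * r ^ 4 + 1498 * r ^ 5 + 252 * r ^ 6
  | 5 => 12 * r ^ 4 + 42 * r ^ 5 + 28 * r ^ 6
  | 7 => 12 * r ^ 4 + 21 * r ^ 5
  | 8 => 7 * r ^ 5
  | 9 => 4 * r ^ 4
  | _ => 0

/-- The common denominator of the coefficients in `num`, up to the factor `28 (r + 1)`. -/
def den (r : ℝ) : ℝ := (r + 4) * (r + 1) * (r ^ 2 + 3 * r + 1) ^ 2

lemma den_pos {r : ℝ} (hr : 0 < r) : 0 < den r := by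
  unfold den
  positivity

lemma num_nonneg {r : ℝ} (hr : 0 < r) (k : ℕ) : 0 ≤ num r k := by
  unfold num
  split <;> positivity

/-- The error of the interpolation. -/
lemma num_identity (r z : ℝ) :
    28 * ((r + 1) * den r) * z ^ 5 - (z + r) * ∑ k ∈ Finset.range 10, num r k * cheb k z =
      z * (z - 4) * (z - 1) ^ 2 * (z ^ 2 - 3 * z + 1) ^ 2 *
        (r ^ 4 * ((20 - 7 * r - 4 * z) * (z + r) - 28)) := by
  simp only [Finset.sum_range_succ, Finset.sum_range_zero, num, den, cheb]
  ring

lemma num_le {r z : ℝ} (hr : 0 < r) (h0 : 0 ≤ z) (h4 : z ≤ 4) :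
    ∑ k ∈ Finset.range 10, num r k / (28 * den r) * cheb k z ≤ (r + 1) * (z ^ 5 / (z + r)) := by
  have hd := den_pos hr
  have hzr : 0 < z + r := by linarith
  have hneg : r ^ 4 * ((20 - 7 * r - 4 * z) * (z + r) - 28) ≤ 0 := by
    refine mul_nonpos_of_nonneg_of_nonpos (by positivity) ?_
    -- with `w = z + r`, the product is `(20 - 4 w) w - 3 r w ≤ 25`
    nlinarith [sq_nonneg (2 * (z + r) - 5), mul_pos hr hzr]
  have h := mul_nonneg_of_nonpos_of_nonpos (node_nonpos h0 h4) hneg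
  rw [← num_identity] at h
  have e : ∑ k ∈ Finset.range 10, num r k / (28 * den r) * cheb k z =
      (∑ k ∈ Finset.range 10, num r k * cheb k z) / (28 * den r) := by
    rw [Finset.sum_div]
    exact Finset.sum_congr rfl fun k _ => by ring
  rw [e, ← mul_div_assoc, div_le_div_iff₀ (by positivity) hzr]
  linarith

lemma num_eq {r z : ℝ} (hr : 0 < r) (h0 : 0 ≤ z)
    (hz : z * (z - 4) * (z - 1) ^ 2 * (z ^ 2 - 3 * z + 1) ^ 2 = 0) :
    ∑ k ∈ Finset.range 10, num r k / (28 * den r) * cheb k z = (r + 1) * (z ^ 5 / (z + r)) := by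
  have hd := den_pos hr
  have hzr : 0 < z + r := by linarith
  have h := num_identity r z
  rw [hz, zero_mul] at h
  have e : ∑ k ∈ Finset.range 10, num r k / (28 * den r) * cheb k z =
      (∑ k ∈ Finset.range 10, num r k * cheb k z) / (28 * den r) := by
    rw [Finset.sum_div]
    exact Finset.sum_congr rfl fun k _ => by ring
  rw [e, ← mul_div_assoc, div_eq_div_iff (by positivity) hzr.ne']
  linarith

/-! ### Mixing the certificates -/

lemma num_bounded {r : ℝ} (hr : 0 < r) (k : ℕ) : ‖num r k / (28 * den r)‖ ≤ 1000 := by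
  have hd := den_pos hr
  rw [Real.norm_of_nonneg (div_nonneg (num_nonneg hr k) (by positivity)),
    div_le_iff₀ (by positivity), ← sub_nonneg]
  unfold num den
  split <;> ring_nf <;> positivity

/-- The coefficients of the certificate for `z ^ (4 + α)`, up to a positive factor: the mixture of
the certificates for `z⁵ / (z + r)` with the weight `r ^ (α - 1)`, written here as
`(r + 1) * rpowIntegrand₀₁ α r 1`. -/
def mixCoeff (α : ℝ) (k : ℕ) : ℝ :=
  ∫ r in Set.Ioi 0, Real.rpowIntegrand₀₁ α r 1 * (num r k / (28 * den r))

lemma mixCoeff_nonneg {α : ℝ} (hα : α ∈ Set.Ioo (0 : ℝ) 1) (k : ℕ) : 0 ≤ mixCoeff α k :=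
  setIntegral_nonneg measurableSet_Ioi fun r hr =>
    mul_nonneg (Real.rpowIntegrand₀₁_nonneg hα.1 (le_of_lt hr) zero_le_one)
      (div_nonneg (num_nonneg hr k) (by have := den_pos hr; positivity))

lemma integrable_mix {α : ℝ} (hα : α ∈ Set.Ioo (0 : ℝ) 1) (k : ℕ) :
    IntegrableOn (fun r => Real.rpowIntegrand₀₁ α r 1 * (num r k / (28 * den r))) (Set.Ioi 0) := by
  refine Integrable.mul_bdd (c := 1000) (Real.integrableOn_rpowIntegrand₀₁_Ioi hα zero_le_one) ?_ ?_
  · refine ContinuousOn.aestronglyMeasurable (ContinuousOn.div ?_ ?_ ?_) measurableSet_Ioi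
    · unfold num
      split <;> fun_prop
    · unfold den
      fun_prop
    · intro r hr
      have := den_pos hr
      positivity
  · filter_upwards [ae_restrict_mem measurableSet_Ioi] with r hr using num_bounded hr k

lemma mix_sum {α : ℝ} (hα : α ∈ Set.Ioo (0 : ℝ) 1) (z : ℝ) :
    ∑ k ∈ Finset.range 10, mixCoeff α k * cheb k z =
      ∫ r in Set.Ioi 0, Real.rpowIntegrand₀₁ α r 1 *
        ∑ k ∈ Finset.range 10, num r k / (28 * den r) * cheb k z := by
  simp only [mixCoeff, ← integral_mul_const, Finset.mul_sum, ← mul_assoc]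
  rw [integral_finsetSum _ fun k _ => (integrable_mix hα k).mul_const _]

lemma rpowIntegrand_scale {α r z : ℝ} (hα : α ∈ Set.Ioo (0 : ℝ) 1) (hr : 0 < r) (hz : 0 ≤ z) :
    Real.rpowIntegrand₀₁ α r 1 * ((r + 1) * (z ^ 5 / (z + r))) =
      z ^ 4 * Real.rpowIntegrand₀₁ α r z := by
  rw [Real.rpowIntegrand₀₁_eq_pow_div hα hr.le zero_le_one, Real.rpowIntegrand₀₁_eq_pow_div hα hr.le hz,
    add_comm z r]
  have : 0 < r + z := by linarith
  have : 0 < r + 1 := by linarith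
  field_simp

lemma mix_le {α : ℝ} (hα : α ∈ Set.Ioo (0 : ℝ) 1) {z : ℝ} (h0 : 0 ≤ z) (h4 : z ≤ 4) :
    ∑ k ∈ Finset.range 10, mixCoeff α k * cheb k z ≤
      z ^ 4 * ∫ r in Set.Ioi 0, Real.rpowIntegrand₀₁ α r z := by
  rw [mix_sum hα, ← integral_const_mul]
  refine setIntegral_mono_on ?_ ((Real.integrableOn_rpowIntegrand₀₁_Ioi hα h0).const_mul _)
    measurableSet_Ioi fun r hr => ?_
  · simp only [Finset.mul_sum, ← mul_assoc]
    exact integrable_finsetSum _ fun k _ => (integrable_mix hα k).mul_const _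
  · rw [← rpowIntegrand_scale hα hr h0]
    exact mul_le_mul_of_nonneg_left (num_le hr h0 h4)
      (Real.rpowIntegrand₀₁_nonneg hα.1 (le_of_lt hr) zero_le_one)

lemma mix_eq {α : ℝ} (hα : α ∈ Set.Ioo (0 : ℝ) 1) {z : ℝ} (h0 : 0 ≤ z)
    (hz : z * (z - 4) * (z - 1) ^ 2 * (z ^ 2 - 3 * z + 1) ^ 2 = 0) :
    ∑ k ∈ Finset.range 10, mixCoeff α k * cheb k z =
      z ^ 4 * ∫ r in Set.Ioi 0, Real.rpowIntegrand₀₁ α r z := by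
  rw [mix_sum hα, ← integral_const_mul]
  refine setIntegral_congr_fun measurableSet_Ioi fun r hr => ?_
  rw [← rpowIntegrand_scale hα hr h0, num_eq hr h0 hz]

/-- The coefficients in the expansion of `z⁴` with respect to `cheb`. -/
def coeffFour : ℕ → ℝ
  | 0 => 14 | 1 => 28 | 2 => 20 | 3 => 7 | 4 => 1 | _ => 0

/-- The coefficients in the expansion of `z⁵` with respect to `cheb`. -/
def coeffFive : ℕ → ℝ
  | 0 => 42 | 1 => 90 | 2 => 75 | 3 => 35 | 4 => 9 | 5 => 1 | _ => 0

lemma abs_rpow_eq (s p : ℝ) :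
    |s| ^ p = (4 : ℝ)⁻¹ ^ (p / 2) * (4 * s ^ 2) ^ (p / 2) := by
  rw [← Real.mul_rpow (by norm_num) (by positivity), inv_mul_cancel_left₀ (by norm_num),
    ← sq_abs, ← Real.rpow_natCast, ← Real.rpow_mul (abs_nonneg s)]
  congr 1
  push_cast
  ring

lemma energy_const_mul (a : ℝ) (f : ℝ → ℝ) (μ : Measure (Sph 4)) :
    energy (fun t => a * f t) μ = a * energy f μ := by
  simp only [energy, integral_const_mul]

/-- optimality of the 600-cell. Let `F` be the vertex set of the
`600`-cell, a `120`-point subset of `S³`. For every `8 ≤ p ≤ 10`, the uniform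
probability measure on `F` minimizes the `p`-frame energy over all Borel probability
measures on `S³`. -/
theorem cell600_minimizes_p_frame_energy
    (F : Finset (Sph 4))
    (hF : ∀ x : Sph 4, x ∈ F ↔ (x : EuclideanSpace ℝ (Fin 4)) ∈ cell600)
    (hcard : F.card = 120)
    (p : ℝ) (hp1 : 8 ≤ p) (hp2 : p ≤ 10)
    (μ : Measure (Sph 4)) [IsProbabilityMeasure μ] :
    energy (fun s => |s| ^ p) (unifOn F) ≤ energy (fun s => |s| ^ p) μ := by
  simp only [abs_rpow_eq _ p]
  rw [energy_const_mul, energy_const_mul _ _ μ]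
  refine mul_le_mul_of_nonneg_left ?_ (by positivity)
  have hcont : Continuous fun z : ℝ => z ^ (p / 2) := Real.continuous_rpow_const (by linarith)
  rcases eq_or_lt_of_le hp1 with rfl | hp1
  · have hz (z : ℝ) : ∑ k ∈ Finset.range 10, coeffFour k * cheb k z = z ^ ((8 : ℝ) / 2) := by
      rw [show ((8 : ℝ) / 2) = (4 : ℕ) by norm_num, Real.rpow_natCast]
      simp only [Finset.sum_range_succ, Finset.sum_range_zero, coeffFour, cheb]
      ring
    refine lp_bound F hF hcard μ hcont coeffFour (fun k => ?_) rfl (fun z _ _ => (hz z).le)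
      fun z _ _ => hz z
    unfold coeffFour
    split <;> norm_num
  rcases eq_or_lt_of_le hp2 with rfl | hp2
  · have hz (z : ℝ) : ∑ k ∈ Finset.range 10, coeffFive k * cheb k z = z ^ ((10 : ℝ) / 2) := by
      rw [show ((10 : ℝ) / 2) = (5 : ℕ) by norm_num, Real.rpow_natCast]
      simp only [Finset.sum_range_succ, Finset.sum_range_zero, coeffFive, cheb]
      ring
    refine lp_bound F hF hcard μ hcont coeffFive (fun k => ?_) rfl (fun z _ _ => (hz z).le)
      fun z _ _ => hz z
    unfold coeffFive
    split <;> norm_num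
  have hα : p / 2 - 4 ∈ Set.Ioo (0 : ℝ) 1 := ⟨by linarith, by linarith⟩
  have hK := Real.integral_rpowIntegrand₀₁_one_pos hα
  have hpow {z : ℝ} (h0 : 0 ≤ z) :
      z ^ 4 * ∫ r in Set.Ioi 0, Real.rpowIntegrand₀₁ (p / 2 - 4) r z =
        z ^ (p / 2) * ∫ r in Set.Ioi 0, Real.rpowIntegrand₀₁ (p / 2 - 4) r 1 := by
    rw [Real.integral_rpowIntegrand₀₁_eq_rpow_mul_const hα h0, ← mul_assoc]
    congr 1
    rw [← Real.rpow_natCast, ← Real.rpow_add_of_nonneg h0 (by norm_num) hα.1.le]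
    congr 1
    push_cast
    ring
  generalize (∫ r in Set.Ioi 0, Real.rpowIntegrand₀₁ (p / 2 - 4) r 1) = K at hK hpow
  have hdiv (z : ℝ) : ∑ k ∈ Finset.range 10, mixCoeff (p / 2 - 4) k / K * cheb k z =
      (∑ k ∈ Finset.range 10, mixCoeff (p / 2 - 4) k * cheb k z) / K := by
    rw [Finset.sum_div]
    exact Finset.sum_congr rfl fun k _ => by ring
  refine lp_bound F hF hcard μ hcont (fun k => mixCoeff (p / 2 - 4) k / K)
    (fun k => div_nonneg (mixCoeff_nonneg hα k) hK.le) (by simp [mixCoeff, num])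
    (fun z h0 h4 => ?_) fun z h0 hz => ?_
  · rw [hdiv, div_le_iff₀ hK, ← hpow h0]
    exact mix_le hα h0 h4
  · rw [hdiv, div_eq_iff hK.ne', ← hpow h0]
    exact mix_eq hα h0 hz
end
end
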